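/- arXiv:1507.03163 — 7 statements merged into one kernel-verified Lean document; each statement's English description precedes it below -/
import Mathlib

section
/- Let n ≥ 2, and in S_{2n} let ρ be the involution pairing 2k with 2k+1, C_ρ its centralizer, and β the 2n-cycle x ↦ x+1 (mod 2n). Then the set Y' = {σ ∈ S_{2n} : σ·ρ·σ⁻¹·ρ is a product of two disjoint n-cycles} is exactly the double coset C_ρ·β·C_ρ = {a·β·b : a, b ∈ C_ρ}. -/
/-- The fixed-point-free involution of `Fin (2n)` pairing `2k` with `2k+1`. -/
def rho (n : ℕ) : Equiv.Perm (Fin (2 * n)) :=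
  Function.Involutive.toPerm
    (fun x => ⟨if x.val % 2 = 0 then x.val + 1 else x.val - 1, by
      have := x.isLt; split_ifs with h <;> omega⟩)
    (by
      intro x
      have hx := x.isLt
      apply Fin.ext
      dsimp only
      split_ifs <;> omega)


theorem my_inv_apply {α : Type*} (f : Equiv.Perm α) (x : α) : f⁻¹ (f x) = x :=
  f.symm_apply_apply x

theorem rho_val (n : ℕ) (x : Fin (2 * n)) :
    (rho n x).val = if x.val % 2 = 0 then x.val + 1 else x.val - 1 := rfl

theorem rho_rho (n : ℕ) : rho n * rho n = 1 := by
  ext x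
  have hx := x.isLt
  simp only [Equiv.Perm.mul_apply, rho_val, Equiv.Perm.one_apply]
  split_ifs <;> omega

theorem rho_ne (n : ℕ) (x : Fin (2 * n)) : rho n x ≠ x := by
  intro h
  have := congrArg Fin.val h
  rw [rho_val] at this
  split_ifs at this <;> omega

theorem rot_val (n : ℕ) (x : Fin (2 * n)) :
    (finRotate (2 * n) x).val = (x.val + 1) % (2 * n) := by
  have hx := x.isLt
  obtain ⟨m, hm⟩ : ∃ m, 2 * n = m + 1 := ⟨2 * n - 1, by omega⟩
  generalize 2 * n = N at *
  subst hm
  rw [finRotate_apply, Fin.val_add]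
  simp

/-- all orbits have length `n` -/
theorem cycleType_iff (n : ℕ) (hn : 2 ≤ n) (g : Equiv.Perm (Fin (2 * n))) :
    g.cycleType = {n, n} ↔ ∀ x (k : ℕ), (g ^ k) x = x ↔ n ∣ k := by
  have key : ∀ x, g x ≠ x → ∀ k : ℕ, (g ^ k) x = x ↔ (g.cycleOf x).support.card ∣ k := by
    intro x hx k
    have hc := Equiv.Perm.isCycle_cycleOf g hx
    rw [← hc.orderOf, orderOf_dvd_iff_pow_eq_one, hc.pow_eq_one_iff' (x := x) (by simpa using hx),
      Equiv.Perm.cycleOf_pow_apply_self]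
  constructor
  · intro h x k
    have hs : g.support = Finset.univ := by
      rw [← Finset.card_eq_iff_eq_univ, ← Equiv.Perm.sum_cycleType, h]
      simp; omega
    have hx : g x ≠ x := by
      rw [← Equiv.Perm.mem_support, hs]; simp
    rw [key x hx]
    have : (g.cycleOf x).support.card ∈ g.cycleType := by
      rw [Equiv.Perm.cycleType_def]
      refine Multiset.mem_map.2 ⟨g.cycleOf x, ?_, rfl⟩
      exact Equiv.Perm.cycleOf_mem_cycleFactorsFinset_iff.2 (Equiv.Perm.mem_support.2 hx)
    rw [h] at this
    simp at this
    rw [this]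
  · intro h
    have hne : ∀ x, g x ≠ x := by
      intro x hx
      have := (h x 1).1 (by simpa using hx)
      have := Nat.le_of_dvd one_pos this
      omega
    have hall : ∀ m ∈ g.cycleType, m = n := by
      intro m hm
      rw [Equiv.Perm.cycleType_def] at hm
      obtain ⟨c, hc, rfl⟩ := Multiset.mem_map.1 hm
      have hc' : c ∈ g.cycleFactorsFinset := hc
      obtain ⟨x, hx⟩ := (Equiv.Perm.mem_cycleFactorsFinset_iff.1 hc').1.nonempty_support
      have := Equiv.Perm.cycle_is_cycleOf hx hc'
      subst this
      apply Nat.dvd_antisymm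
      · exact (key x (hne x) n).1 ((h x n).2 dvd_rfl)
      · exact (h x _).1 ((key x (hne x) _).2 dvd_rfl)
    have hs : g.support = Finset.univ := by
      ext x; simp [hne x]
    have h2 := Equiv.Perm.sum_cycleType g
    rw [hs, Multiset.eq_replicate_of_mem hall] at h2
    simp at h2
    rw [Multiset.eq_replicate_of_mem hall]
    have : Multiset.card g.cycleType = 2 := by
      rcases h2 with h2 | h2 <;> omega
    rw [this]; rfl

theorem gam_even (n : ℕ) (x : Fin (2 * n)) (hx : x.val % 2 = 0) :
    ((finRotate (2 * n) * rho n * (finRotate (2 * n))⁻¹ * rho n) x).val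
      = (x.val + 2) % (2 * n) := by
  have hl := x.isLt
  have h1 : rho n x = finRotate (2 * n) x := by
    apply Fin.ext
    rw [rho_val, rot_val, if_pos hx, Nat.mod_eq_of_lt]; omega
  rw [Equiv.Perm.mul_apply, h1]
  simp only [Equiv.Perm.mul_apply, my_inv_apply]
  rw [rot_val, rho_val, if_pos hx]

theorem gam_pow_even (n : ℕ) (x : Fin (2 * n)) (hx : x.val % 2 = 0) (k : ℕ) :
    (((finRotate (2 * n) * rho n * (finRotate (2 * n))⁻¹ * rho n) ^ k) x).val
      = (x.val + 2 * k) % (2 * n) := by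
  induction k with
  | zero => simp [Nat.mod_eq_of_lt x.isLt]
  | succ k ih =>
    rw [pow_succ', Equiv.Perm.mul_apply, gam_even, ih, Nat.mod_add_mod]
    · congr 1
    · rw [ih, Nat.mod_mul_right_mod]; omega

theorem conj_rel {G : Type*} [Group G] (t r : G) (ht : t * t = 1) (hr : r * r = 1) (k : ℤ) :
    (t * r) ^ k * r = r * (t * r) ^ (-k) := by
  have ht' : t⁻¹ = t := inv_eq_of_mul_eq_one_left ht
  have hr' : r⁻¹ = r := inv_eq_of_mul_eq_one_left hr
  have : r * (t * r) * r⁻¹ = (t * r)⁻¹ := by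
    rw [mul_inv_rev, ht', hr', mul_assoc, mul_assoc, hr, mul_one]
  have h2 : (r * (t * r) * r⁻¹) ^ (-k) = r * (t * r) ^ (-k) * r⁻¹ := conj_zpow
  rw [this, inv_zpow, zpow_neg, inv_inv] at h2
  rw [h2, zpow_neg]; group

theorem sq_conj {G : Type*} [Group G] (s r : G) (hr : r * r = 1) :
    (s * r * s⁻¹) * (s * r * s⁻¹) = 1 := by
  have : (s * r * s⁻¹) * (s * r * s⁻¹) = s * (r * r) * s⁻¹ := by group
  rw [this, hr]; group

theorem gam_cycleType (n : ℕ) (hn : 2 ≤ n) :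
    (finRotate (2 * n) * rho n * (finRotate (2 * n))⁻¹ * rho n).cycleType = {n, n} := by
  rw [cycleType_iff n hn]
  have hev : ∀ x : Fin (2 * n), x.val % 2 = 0 → ∀ k : ℕ,
      ((finRotate (2 * n) * rho n * (finRotate (2 * n))⁻¹ * rho n) ^ k) x = x ↔ n ∣ k := by
    intro x hx k
    rw [Fin.ext_iff, gam_pow_even n x hx]
    have hl := x.isLt
    constructor
    · intro h
      have : x.val + 2 * k ≡ x.val + 0 [MOD 2 * n] := by
        rw [Nat.ModEq, h, add_zero, Nat.mod_eq_of_lt hl]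
      have := (Nat.modEq_zero_iff_dvd.1 (Nat.ModEq.add_left_cancel' _ this))
      exact Nat.dvd_of_mul_dvd_mul_left two_pos this
    · rintro ⟨c, rfl⟩
      rw [← mul_assoc, Nat.add_mul_mod_self_left, Nat.mod_eq_of_lt hl]
  intro x k
  by_cases hx : x.val % 2 = 0
  · exact hev x hx k
  · have hy : (rho n x).val % 2 = 0 := by
      rw [rho_val, if_neg hx]; omega
    rw [← hev _ hy k]
    have h := conj_rel (finRotate (2 * n) * rho n * (finRotate (2 * n))⁻¹) (rho n)
      (sq_conj _ _ (rho_rho n)) (rho_rho n) k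
    have h2 := congrArg (fun f => f x) h
    simp only [zpow_neg, zpow_natCast] at h2
    rw [Equiv.Perm.mul_apply, Equiv.Perm.mul_apply (rho n)] at h2
    rw [h2, (rho n).injective.eq_iff, Equiv.Perm.inv_eq_iff_eq]
    exact eq_comm

theorem rho_ne_zpow {α : Type*} (t r : Equiv.Perm α) (ht : t * t = 1) (hr : r * r = 1)
    (ht' : ∀ x, t x ≠ x) (hr' : ∀ x, r x ≠ x) (k : ℤ) (x : α) :
    r x ≠ ((t * r) ^ k) x := by
  intro h
  have hrel : ∀ (m : ℤ) y, r (((t * r) ^ m) y) = ((t * r) ^ (-m)) (r y) := by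
    intro m y
    have := conj_rel t r ht hr (-m)
    rw [neg_neg] at this
    rw [← Equiv.Perm.mul_apply, ← this, Equiv.Perm.mul_apply]
  obtain ⟨m, rfl | rfl⟩ := Int.even_or_odd' k
  · apply hr' (((t * r) ^ m) x)
    rw [hrel, h, ← Equiv.Perm.mul_apply, ← zpow_add]
    congr 2; ring
  · apply ht' (((t * r) ^ (m + 1)) x)
    have h1 : ∀ y, t y = (t * r) (r y) := by
      intro y
      rw [← Equiv.Perm.mul_apply, mul_assoc, hr, mul_one]
    rw [h1, hrel, h, ← Equiv.Perm.mul_apply, ← Equiv.Perm.mul_apply, mul_assoc, ← zpow_add,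
      ← zpow_one_add]
    congr 2; ring

theorem exists_conj (n : ℕ) (hn : 2 ≤ n) (t : Equiv.Perm (Fin (2 * n))) (ht : t * t = 1)
    (ht' : ∀ x, t x ≠ x) (hc : (t * rho n).cycleType = {n, n}) :
    ∃ a : Equiv.Perm (Fin (2 * n)), a * rho n = rho n * a ∧
      a * (finRotate (2 * n) * rho n * (finRotate (2 * n))⁻¹) = t * a := by
  rw [cycleType_iff n hn] at hc
  set g := t * rho n with hg
  let x0 : Fin (2 * n) := ⟨0, by omega⟩
  let f : Fin (2 * n) → Fin (2 * n) := fun x =>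
    if x.val % 2 = 0 then (g ^ (x.val / 2)) x0 else rho n ((g ^ (x.val / 2)) x0)
  have hpow : ∀ i j : ℕ, i < n → j < n → (g ^ i) x0 = (g ^ j) x0 → i = j := by
    have aux : ∀ i j : ℕ, i ≤ j → j < n → (g ^ i) x0 = (g ^ j) x0 → i = j := by
      intro i j hij hj h
      have h1 : j = i + (j - i) := by omega
      rw [h1, pow_add, Equiv.Perm.mul_apply, (g ^ i).injective.eq_iff] at h
      have := (hc x0 (j - i)).1 h.symm
      have := Nat.eq_zero_of_dvd_of_lt this (by omega)
      omega
    intro i j hi hj h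
    rcases le_total i j with hij | hij
    · exact aux i j hij hj h
    · exact (aux j i hij hi h.symm).symm
  have hmix : ∀ i j : ℕ, rho n ((g ^ j) x0) ≠ (g ^ i) x0 := by
    intro i j h
    apply rho_ne_zpow t (rho n) ht (rho_rho n) ht' (rho_ne n) ((i : ℤ) - j) ((g ^ j) x0)
    rw [h, ← hg, ← zpow_natCast g j, ← Equiv.Perm.mul_apply, ← zpow_add]
    simp
  have hinj : Function.Injective f := by
    intro x y h
    have hx := x.isLt
    have hy := y.isLt
    simp only [f] at h
    apply Fin.ext
    split_ifs at h with h1 h2 h2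
    · have := hpow _ _ (by omega) (by omega) h
      omega
    · exact absurd h.symm (hmix _ _)
    · exact absurd h (hmix _ _)
    · have := hpow _ _ (by omega) (by omega) ((rho n).injective h)
      omega
  let a : Equiv.Perm (Fin (2 * n)) := Equiv.ofBijective f (Finite.injective_iff_bijective.1 hinj)
  have ha : ∀ x, a x = f x := fun x => rfl
  have hrr : ∀ x, rho n (rho n x) = x := fun x => by
    rw [← Equiv.Perm.mul_apply, rho_rho, Equiv.Perm.one_apply]
  have hcomm : ∀ x, a (rho n x) = rho n (a x) := by
    intro x
    simp only [ha, f, rho_val]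
    by_cases h : x.val % 2 = 0
    · have h1 : (x.val + 1) % 2 ≠ 0 := by omega
      have h2 : (x.val + 1) / 2 = x.val / 2 := by omega
      simp only [h, if_true, h1, if_false, h2]
    · have h1 : (x.val - 1) % 2 = 0 := by omega
      have h2 : (x.val - 1) / 2 = x.val / 2 := by omega
      simp only [h, if_true, h1, if_false, h2, hrr]
  set T := finRotate (2 * n) * rho n * (finRotate (2 * n))⁻¹ with hT
  have hgam : ∀ y : Fin (2 * n), y.val % 2 = 0 → a ((T * rho n) y) = g (a y) := by
    intro y hy
    have hl := y.isLt
    have hv := gam_even n y hy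
    rw [← hT] at hv
    have hgn : (g ^ n) x0 = x0 := (hc x0 n).2 dvd_rfl
    simp only [ha, f, hv, hy, if_true]
    rw [← Equiv.Perm.mul_apply g, ← pow_succ']
    by_cases hlt : y.val + 2 < 2 * n
    · rw [Nat.mod_eq_of_lt hlt, if_pos (by omega)]
      congr 2; omega
    · have h1 : y.val + 2 = 2 * n := by omega
      have h2 : y.val / 2 + 1 = n := by omega
      rw [h1, h2, hgn]; simp
  have hodd : ∀ x : Fin (2 * n), x.val % 2 ≠ 0 → a (T x) = t (a x) := by
    intro x hx
    have hy : (rho n x).val % 2 = 0 := by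
      rw [rho_val, if_neg hx]; omega
    have := hgam _ hy
    rwa [Equiv.Perm.mul_apply T, hrr, hcomm, hg, Equiv.Perm.mul_apply t, hrr] at this
  have hTT : ∀ x, T (T x) = x := fun x => by
    rw [← Equiv.Perm.mul_apply, hT, sq_conj _ _ (rho_rho n), Equiv.Perm.one_apply]
  have htt : ∀ x, t (t x) = x := fun x => by
    rw [← Equiv.Perm.mul_apply, ht, Equiv.Perm.one_apply]
  have hpar : ∀ x : Fin (2 * n), x.val % 2 = 0 → (T x).val % 2 ≠ 0 := by
    intro x hx
    obtain ⟨z, rfl⟩ := (finRotate (2 * n)).surjective x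
    rw [hT]
    simp only [Equiv.Perm.mul_apply, my_inv_apply]
    rw [rot_val, Nat.mod_mul_right_mod] at hx
    rw [rot_val, Nat.mod_mul_right_mod, rho_val, if_neg (by omega)]
    omega
  refine ⟨a, Equiv.ext hcomm, Equiv.ext fun x => ?_⟩
  change a (T x) = t (a x)
  by_cases hx : x.val % 2 = 0
  · have := hodd _ (hpar x hx)
    rw [hTT] at this
    rw [this, htt]
  · exact hodd x hx

/-- The set `Y' = {σ : σ·ρ·σ⁻¹·ρ is a product of two disjoint n-cycles}` is exactly
the double coset C_ρ·β·C_ρ, where C_ρ is the centralizer of ρ and β is the 2n-cycle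
`x ↦ x + 1 (mod 2n)`. -/
theorem Yprime_eq_double_coset (n : ℕ) (hn : 2 ≤ n) :
    {σ : Equiv.Perm (Fin (2 * n)) |
        (σ * rho n * σ⁻¹ * rho n).cycleType = {n, n}}
      = {σ : Equiv.Perm (Fin (2 * n)) |
          ∃ a ∈ Subgroup.centralizer {rho n}, ∃ b ∈ Subgroup.centralizer {rho n},
            σ = a * finRotate (2 * n) * b} := by
  ext σ
  simp only [Set.mem_ofPred_eq, Subgroup.mem_centralizer_singleton_iff]
  constructor
  · intro h
    obtain ⟨a, ha, hT⟩ := exists_conj n hn (σ * rho n * σ⁻¹) (sq_conj _ _ (rho_rho n))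
      (by
        intro x hx
        apply rho_ne n (σ⁻¹ x)
        apply σ.injective
        simpa using hx) h
    refine ⟨a, ?_, (a * finRotate (2 * n))⁻¹ * σ, ?_, by group⟩
    · exact ha
    · have h1 : ((a * finRotate (2 * n))⁻¹ * σ) * rho n =
          (finRotate (2 * n))⁻¹ * a⁻¹ * ((σ * rho n * σ⁻¹) * a) * a⁻¹ * σ := by group
      rw [← hT] at h1
      have h2 : ((a * finRotate (2 * n))⁻¹ * σ) * rho n =
          rho n * ((a * finRotate (2 * n))⁻¹ * σ) := by rw [h1]; group
      exact h2
  · rintro ⟨a, ha, b, hb, rfl⟩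
    have ha' : a * rho n = rho n * a := by exact ha
    have hb' : b * rho n = rho n * b := by exact hb
    have ha2 : a⁻¹ * rho n = rho n * a⁻¹ := by
      rw [inv_mul_eq_iff_eq_mul, ← mul_assoc, ha']; group
    have : a * finRotate (2 * n) * b * rho n * (a * finRotate (2 * n) * b)⁻¹ * rho n
        = a * (finRotate (2 * n) * rho n * (finRotate (2 * n))⁻¹ * rho n) * a⁻¹ := by
      calc _ = a * finRotate (2 * n) * (b * rho n) * b⁻¹ * (finRotate (2 * n))⁻¹ * (a⁻¹ * rho n) := by
            group
        _ = _ := by rw [hb', ha2]; group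
    rw [this, Equiv.Perm.cycleType_conj]
    exact gam_cycleType n hn
end

section
/- Let n ≥ 2, and in S_{2n} let ρ be the involution pairing 2k with 2k+1. Then the number of permutations τ ∈ S_{2n} that are products of n disjoint transpositions (i.e. lie in the conjugacy class of ρ) and such that τ·ρ is a product of two disjoint n-cycles equals 2^{n−1}·(n−1)!. -/
open Equiv.Perm

lemma aux1 {α : Type*} [Fintype α] [DecidableEq α] (σ : Equiv.Perm α) (x : α) (hx : σ x ≠ x) (i : ℕ) :
    (σ ^ i) x = x ↔ (σ.cycleOf x).support.card ∣ i := by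
  rw [← cycleOf_pow_apply_self, ← (isCycle_cycleOf σ hx).orderOf, orderOf_dvd_iff_pow_eq_one]
  constructor
  · intro h
    exact ((isCycle_cycleOf σ hx).pow_eq_one_iff).2 ⟨x, by simpa using hx, h⟩
  · intro h; rw [h]; rfl

lemma regular_iff {α : Type*} [Fintype α] [DecidableEq α] (σ : Equiv.Perm α) (k m : ℕ) (hm : 2 ≤ m)
    (hc : Fintype.card α = k * m) :
    σ.cycleType = Multiset.replicate k m ↔ ∀ x (i : ℕ), (σ ^ i) x = x ↔ m ∣ i := by
  constructor
  · intro h x i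
    have hs : σ.support = Finset.univ := by
      rw [← Finset.card_eq_iff_eq_univ, ← sum_cycleType, h, hc]; simp
    have hx : σ x ≠ x := by rw [← mem_support, hs]; simp
    have h2 : (σ.cycleOf x).support.card ∈ σ.cycleType := by
      rw [cycleType_def]
      exact Multiset.mem_map_of_mem _ (cycleOf_mem_cycleFactorsFinset_iff.2 (by rw [hs]; simp))
    rw [h] at h2
    rw [aux1 σ x hx, Multiset.eq_of_mem_replicate h2]
  · intro h
    have hx : ∀ x, σ x ≠ x := by
      intro x hx
      have := (h x 1).1 (by simpa using hx)
      have := Nat.le_of_dvd one_pos this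
      omega
    have hs : σ.support = Finset.univ := by ext x; simp [hx]
    have h1 : ∀ a ∈ σ.cycleType, a = m := by
      intro a ha
      rw [cycleType_def] at ha
      obtain ⟨c, hc, rfl⟩ := Multiset.mem_map.1 ha
      have hcyc := (mem_cycleFactorsFinset_iff.1 hc).1
      obtain ⟨x, hxc⟩ := hcyc.nonempty_support
      rw [cycle_is_cycleOf hxc hc]
      apply Nat.dvd_antisymm
      · exact (aux1 σ x (hx x) m).1 ((h x m).2 dvd_rfl)
      · exact (h x _).1 ((aux1 σ x (hx x) _).2 dvd_rfl)
    have h2 := Multiset.eq_replicate_card.2 h1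
    have h3 := sum_cycleType σ
    rw [h2, hs, Finset.card_univ, hc, Multiset.sum_replicate, smul_eq_mul] at h3
    rw [h2, Nat.eq_of_mul_eq_mul_right (by omega) h3]


lemma invol_iff {α : Type*} [Fintype α] [DecidableEq α] (σ : Equiv.Perm α) (n : ℕ)
    (hc : Fintype.card α = n * 2) :
    σ.cycleType = Multiset.replicate n 2 ↔ (∀ x, σ (σ x) = x) ∧ ∀ x, σ x ≠ x := by
  rw [regular_iff σ n 2 le_rfl hc]
  constructor
  · intro h
    refine ⟨fun x => by simpa [pow_two] using (h x 2).2 dvd_rfl, fun x hx => ?_⟩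
    have := (h x 1).1 (by simpa using hx)
    omega
  · rintro ⟨h1, h2⟩ x i
    have hs : σ ^ 2 = 1 := by ext y; simp [pow_two, h1]
    rcases Nat.even_or_odd' i with ⟨j, rfl | rfl⟩
    · simp [pow_mul, hs]
    · simp only [pow_succ, pow_mul, hs, one_pow, one_mul, h2, false_iff]
      omega

/-- flip on the model -/
def mflip (n : ℕ) : Equiv.Perm (ZMod n × Bool) where
  toFun p := (p.1, !p.2)
  invFun p := (p.1, !p.2)
  left_inv p := by simp
  right_inv p := by simp

/-- shifted flip on the model -/
def mshift (n : ℕ) : Equiv.Perm (ZMod n × Bool) where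
  toFun p := if p.2 then (p.1 + 1, false) else (p.1 - 1, true)
  invFun p := if p.2 then (p.1 + 1, false) else (p.1 - 1, true)
  left_inv p := by rcases p with ⟨i, _ | _⟩ <;> simp
  right_inv p := by rcases p with ⟨i, _ | _⟩ <;> simp

lemma mprod_pow (n : ℕ) (i : ℕ) (p : ZMod n × Bool) :
    ((mshift n * mflip n) ^ i) p = if p.2 then (p.1 - i, true) else (p.1 + i, false) := by
  induction i generalizing p with
  | zero => rcases p with ⟨i, _ | _⟩ <;> simp
  | succ k ih =>
    rw [pow_succ, Equiv.Perm.mul_apply, ih]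
    rcases p with ⟨i, _ | _⟩ <;> simp [mshift, mflip] <;> ring

/-- The condition, pointwise. -/
def Good {α : Type*} (n : ℕ) (ρ τ : Equiv.Perm α) : Prop :=
  ((∀ x, τ (τ x) = x) ∧ ∀ x, τ x ≠ x) ∧ ∀ x (i : ℕ), ((τ * ρ) ^ i) x = x ↔ n ∣ i

lemma model_good (n : ℕ) : Good n (mflip n) (mshift n) := by
  refine ⟨⟨?_, ?_⟩, ?_⟩
  · rintro ⟨i, _ | _⟩ <;> simp [mshift]
  · rintro ⟨i, _ | _⟩ <;> simp [mshift]
  · rintro ⟨i, _ | _⟩ k <;> simp [mprod_pow, ZMod.natCast_eq_zero_iff]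

lemma good_congr {α β : Type*} (n : ℕ) (e : β ≃ α) (ρ τ : Equiv.Perm β) (h : Good n ρ τ) :
    Good n (e.permCongr ρ) (e.permCongr τ) := by
  obtain ⟨⟨h1, h2⟩, h3⟩ := h
  refine ⟨⟨fun x => by simp [h1], fun x hx => ?_⟩, fun x i => ?_⟩
  · apply h2 (e.symm x)
    apply e.injective
    simpa using hx
  · have : (e.permCongr τ * e.permCongr ρ) ^ i = e.permCongr ((τ * ρ) ^ i) := by
      have := map_pow e.permCongrHom (τ * ρ) i
      rw [map_mul] at this
      exact this.symm
    rw [this, ← h3 (e.symm x) i]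
    rw [Equiv.permCongr_apply, Equiv.eq_symm_apply]

lemma model_trans (n : ℕ) [NeZero n] (S : Set (ZMod n × Bool)) (h0 : (0, false) ∈ S)
    (hf : ∀ p ∈ S, mflip n p ∈ S) (hs : ∀ p ∈ S, mshift n p ∈ S) (p) : p ∈ S := by
  have h1 : ∀ k : ℕ, ((k : ZMod n), false) ∈ S := by
    intro k
    induction k with
    | zero => simpa using h0
    | succ k ih => simpa [mshift, mflip] using hs _ (hf _ ih)
  have h2 : ∀ i : ZMod n, (i, false) ∈ S := fun i => by
    simpa using h1 i.val
  rcases p with ⟨i, _ | _⟩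
  · exact h2 i
  · simpa [mflip] using hf _ (h2 i)

lemma exists_param {α : Type*} [Fintype α] (n : ℕ) [NeZero n] (hc : Fintype.card α = n * 2)
    (ρ τ : Equiv.Perm α) (hρ : ∀ x, ρ (ρ x) = x) (hρ' : ∀ x, ρ x ≠ x) (h : Good n ρ τ) (x : α) :
    ∃ e : ZMod n × Bool ≃ α, (∀ p, e (mflip n p) = ρ (e p)) ∧ (∀ p, e (mshift n p) = τ (e p)) ∧
      e (0, false) = x := by
  obtain ⟨⟨h1, h2⟩, h3⟩ := h
  set c := τ * ρ with hcdef
  have hcn : c ^ n = 1 := by ext y; simpa using (h3 y n).2 dvd_rfl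
  have hval : ∀ k : ℕ, c ^ (k : ZMod n).val = c ^ k := by
    intro k
    rw [ZMod.val_natCast, ← pow_eq_pow_mod k hcn]
  have hinv : ∀ y, c (ρ (c y)) = ρ y := by
    intro y; simp [hcdef, hρ, h1]
  have hinvk : ∀ (k : ℕ) y, (c ^ k) (ρ ((c ^ k) y)) = ρ y := by
    intro k
    induction k with
    | zero => simp
    | succ k ih =>
      intro y
      have e1 : ∀ z, (c ^ (k + 1)) z = (c ^ k) (c z) := fun z => by rw [pow_succ]; rfl
      have e2 : ∀ z, (c ^ (k + 1)) z = c ((c ^ k) z) := fun z => by rw [pow_succ']; rfl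
      rw [e1 (ρ _), e2, hinv, ih]
  -- no power of c sends y to ρ y
  have hne : ∀ (m : ℕ) y, (c ^ m) y ≠ ρ y := by
    intro m y hm
    rcases Nat.even_or_odd' m with ⟨l, rfl | rfl⟩
    · have e1 := hinvk l y
      rw [← hm, two_mul, pow_add, Equiv.Perm.mul_apply] at e1
      exact hρ' _ ((c ^ l).injective e1)
    · have e1 := hinvk l y
      rw [← hm, two_mul, add_assoc, pow_add, Equiv.Perm.mul_apply] at e1
      have e2 := (c ^ l).injective e1
      rw [pow_succ', Equiv.Perm.mul_apply] at e2
      nth_rw 2 [hcdef] at e2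
      rw [Equiv.Perm.mul_apply] at e2
      exact h2 _ e2.symm
  let f : ZMod n × Bool → α := fun p => if p.2 then ρ ((c ^ p.1.val) x) else (c ^ p.1.val) x
  have hsucc : ∀ i : ZMod n, (c ^ (i + 1).val) x = τ (ρ ((c ^ i.val) x)) := by
    intro i
    have : i + 1 = ((i.val + 1 : ℕ) : ZMod n) := by simp
    rw [this, hval, pow_succ']
    rfl
  have hff : ∀ p, f (mflip n p) = ρ (f p) := by
    rintro ⟨i, _ | _⟩ <;> simp [f, mflip, hρ]
  have hfs : ∀ p, f (mshift n p) = τ (f p) := by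
    rintro ⟨i, _ | _⟩
    · have := hsucc (i - 1)
      simp only [sub_add_cancel] at this
      simp [f, mshift, this, h1]
    · simp [f, mshift, hsucc]
  have hcross : ∀ i j : ZMod n, (c ^ i.val) x ≠ ρ ((c ^ j.val) x) := by
    intro i j hij
    have e1 := hinvk j.val x
    rw [← hij, ← Equiv.Perm.mul_apply, ← pow_add] at e1
    exact hne _ _ e1
  have hsame : ∀ i j : ZMod n, i.val ≤ j.val → (c ^ i.val) x = (c ^ j.val) x → i = j := by
    intro i j hle hij
    obtain ⟨d, hd⟩ := Nat.exists_eq_add_of_le hle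
    rw [hd, pow_add, Equiv.Perm.mul_apply] at hij
    have e1 := (h3 x d).1 ((c ^ i.val).injective hij).symm
    have := ZMod.val_lt j
    have hd0 : d = 0 := Nat.eq_zero_of_dvd_of_lt e1 (by omega)
    apply ZMod.val_injective n
    omega
  have hsame' : ∀ i j : ZMod n, (c ^ i.val) x = (c ^ j.val) x → i = j := by
    intro i j hij
    rcases le_total i.val j.val with hl | hl
    · exact hsame i j hl hij
    · exact (hsame j i hl hij.symm).symm
  have hinj : Function.Injective f := by
    rintro ⟨i, _ | _⟩ ⟨j, _ | _⟩ hij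
    · simpa using hsame' i j (by simpa [f] using hij)
    · exact absurd (by simpa [f] using hij) (hcross i j)
    · exact absurd (by simpa [f] using hij.symm) (hcross j i)
    · simpa using hsame' i j (by simpa [f] using hij)
  have hbij : Function.Bijective f := by
    rw [Fintype.bijective_iff_injective_and_card]
    exact ⟨hinj, by simp [hc, ZMod.card]⟩
  exact ⟨Equiv.ofBijective f hbij, hff, hfs, by simp [f]⟩

lemma param_equiv {α : Type*} [Fintype α] (n : ℕ) [NeZero n] (hc : Fintype.card α = n * 2)
    (ρ : Equiv.Perm α) (hρ : ∀ x, ρ (ρ x) = x) (hρ' : ∀ x, ρ x ≠ x) :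
    Nat.card {e : ZMod n × Bool ≃ α // ∀ p, e (mflip n p) = ρ (e p)} =
      Nat.card {τ : Equiv.Perm α // Good n ρ τ} * (2 * n) := by
  have hα : 2 * n = Nat.card α := by rw [Nat.card_eq_fintype_card, hc, mul_comm]
  rw [hα, ← Nat.card_prod]
  have hperm : ∀ e : {e : ZMod n × Bool ≃ α // ∀ p, e (mflip n p) = ρ (e p)},
      e.1.permCongr (mflip n) = ρ := by
    intro e; ext y; simp [e.2]
  refine Nat.card_eq_of_bijective (fun e => (⟨e.1.permCongr (mshift n), by
    have := good_congr n e.1 _ _ (model_good n)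
    rwa [hperm] at this⟩, e.1 (0, false))) ⟨?_, ?_⟩
  · rintro ⟨e, he⟩ ⟨e', he'⟩ hee
    simp only [Prod.mk.injEq, Subtype.mk.injEq] at hee
    obtain ⟨ha, hb⟩ := hee
    have key : ∀ p, p ∈ {p | e p = e' p} := by
      apply model_trans n
      · exact hb
      · intro p (hp : e p = e' p)
        change e _ = e' _
        rw [he, he', hp]
      · intro p (hp : e p = e' p)
        have := DFunLike.congr_fun ha (e p)
        change e _ = e' _
        rw [Equiv.permCongr_apply, Equiv.permCongr_apply, Equiv.symm_apply_apply, hp,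
          Equiv.symm_apply_apply] at this
        exact this
    exact Subtype.ext (Equiv.ext key)
  · rintro ⟨⟨τ, hτ⟩, x⟩
    obtain ⟨e, h1, h2, h3⟩ := exists_param n hc ρ τ hρ hρ' hτ x
    refine ⟨⟨e, h1⟩, ?_⟩
    simp only [Prod.mk.injEq, Subtype.mk.injEq]
    refine ⟨?_, h3⟩
    ext y; simp [h2]

lemma card_param {α : Type*} [Fintype α] [DecidableEq α] (n : ℕ) [NeZero n]
    (hc : Fintype.card α = n * 2)
    (ρ : Equiv.Perm α) (h : ρ.cycleType = Multiset.replicate n 2) :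
    Nat.card {e : ZMod n × Bool ≃ α // ∀ p, e (mflip n p) = ρ (e p)} = 2 ^ n * n.factorial := by
  have e1 : ZMod n × Bool ≃ α := Fintype.equivOfCardEq (by simp [hc, ZMod.card])
  have h2 : (e1.permCongr (mflip n)).cycleType = Multiset.replicate n 2 := by
    rw [invol_iff _ n hc]
    refine ⟨fun x => by simp [mflip], fun x hx => ?_⟩
    have : mflip n (e1.symm x) = e1.symm x := e1.injective (by simpa using hx)
    have := congrArg Prod.snd this
    simp [mflip] at this
  obtain ⟨g, hg⟩ := isConj_iff.1 (isConj_iff_cycleType_eq.2 (h2.trans h.symm))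
  let e0 : ZMod n × Bool ≃ α := e1.trans g
  have he0 : ∀ p, e0 (mflip n p) = ρ (e0 p) := by
    intro p
    rw [← hg]; simp [e0]
  have hcen : Nat.card (Subgroup.centralizer {ρ}) = 2 ^ n * n.factorial := by
    rw [nat_card_centralizer, h, hc]
    have hn : n ≠ 0 := NeZero.ne n
    simp [Multiset.toFinset_replicate, hn]
  rw [← hcen]
  refine Nat.card_congr ⟨fun e => ⟨e0.symm.trans e.1, ?_⟩, fun g => ⟨e0.trans g.1, ?_⟩, ?_, ?_⟩
  · rw [Subgroup.mem_centralizer_singleton_iff]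
    ext y
    obtain ⟨p, rfl⟩ := e0.surjective y
    simp [← he0, e.2]
  · intro p
    have := (Subgroup.mem_centralizer_singleton_iff.1 g.2)
    have := DFunLike.congr_fun this (e0 p)
    simpa [he0] using this
  · intro e; ext p; simp
  · intro g; ext p; simp

/-- The number of permutations τ of `Fin (2n)` that are products of n disjoint
transpositions and such that τ·ρ is a product of two disjoint n-cycles equals
`2^(n-1)·(n-1)!`. -/
theorem card_class_prod_two_ncycles (n : ℕ) (hn : 2 ≤ n) :
    Nat.card {τ : Equiv.Perm (Fin (2 * n)) |
        τ.cycleType = Multiset.replicate n 2 ∧ (τ * rho n).cycleType = {n, n}}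
      = 2 ^ (n - 1) * (n - 1).factorial := by
  have : NeZero n := ⟨by omega⟩
  have hc : Fintype.card (Fin (2 * n)) = n * 2 := by simp [mul_comm]
  have hρ : (∀ x, rho n (rho n x) = x) ∧ ∀ x, rho n x ≠ x := by
    refine ⟨fun x => Function.Involutive.toPerm_involutive _ x, fun x hx => ?_⟩
    have : (if x.val % 2 = 0 then x.val + 1 else x.val - 1) = x.val := congrArg Fin.val hx
    split_ifs at this <;> omega
  have hset : Nat.card {τ : Equiv.Perm (Fin (2 * n)) |
        τ.cycleType = Multiset.replicate n 2 ∧ (τ * rho n).cycleType = {n, n}} =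
      Nat.card {τ : Equiv.Perm (Fin (2 * n)) // Good n (rho n) τ} := by
    refine Nat.card_congr (Equiv.subtypeEquivRight fun τ => ?_)
    have h2 : ({n, n} : Multiset ℕ) = Multiset.replicate 2 n := rfl
    rw [Set.mem_ofPred_eq, h2, invol_iff τ n hc, regular_iff (τ * rho n) 2 n hn (by simp)]
    rfl
  rw [hset]
  have h1 := param_equiv n hc (rho n) hρ.1 hρ.2
  rw [card_param n hc (rho n) ((invol_iff _ n hc).2 hρ)] at h1
  obtain ⟨m, rfl⟩ : ∃ m, n = m + 1 := ⟨n - 1, by omega⟩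
  apply Nat.eq_of_mul_eq_mul_right (show 0 < 2 * (m + 1) by omega)
  rw [← h1, Nat.factorial_succ, Nat.add_sub_cancel]
  ring
end

section
/- Let n ≥ 1, and in S_{2n} let ρ be the involution pairing 2k with 2k+1, C_ρ its centralizer, and β the 2n-cycle x ↦ x+1 (mod 2n). Then the intersection C_ρ ∩ β·C_ρ·β⁻¹ has exactly 2n elements (it is the dihedral group D_n of order 2n). -/
theorem par_add (n : ℕ) (x y : Fin (2 * n)) : (x + y).val % 2 = (x.val + y.val) % 2 := by
  rw [Fin.val_add, Nat.mod_mod_of_dvd _ (Dvd.intro n rfl)]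

theorem par_sub (n : ℕ) [NeZero (2 * n)] (x y : Fin (2 * n)) :
    (x - y).val % 2 = (x.val + y.val) % 2 := by
  have h := par_add n (x - y) y
  rw [sub_add_cancel] at h
  omega

theorem one_val (n : ℕ) [NeZero (2 * n)] : (1 : Fin (2 * n)).val = 1 := by
  have := NeZero.ne (2 * n)
  rw [Fin.val_one', Nat.mod_eq_of_lt (by omega)]

theorem rho_even (n : ℕ) [NeZero (2 * n)] (x : Fin (2 * n)) (h : x.val % 2 = 0) :
    rho n x = x + 1 := by
  apply Fin.ext
  have := x.isLt
  rw [Fin.val_add, one_val, Nat.mod_eq_of_lt (by omega)]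
  exact if_pos h

theorem rho_odd (n : ℕ) [NeZero (2 * n)] (x : Fin (2 * n)) (h : x.val % 2 = 1) :
    rho n x = x - 1 := by
  rw [eq_sub_iff_add_eq]
  apply Fin.ext
  have := x.isLt
  have h2 : (rho n x).val = x.val - 1 := if_neg (by omega)
  rw [Fin.val_add, one_val, h2, Nat.mod_eq_of_lt (by omega)]
  omega

theorem rho_eq (n : ℕ) [NeZero (2 * n)] (x : Fin (2 * n)) :
    rho n x = if x.val % 2 = 0 then x + 1 else x - 1 := by
  split_ifs with h
  · exact rho_even n x h
  · exact rho_odd n x (by omega)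

theorem mem_char (n : ℕ) [NeZero (2 * n)] (g : Equiv.Perm (Fin (2 * n))) :
    g ∈ ((Subgroup.centralizer {rho n} : Set (Equiv.Perm (Fin (2 * n)))) ∩
        {x : Equiv.Perm (Fin (2 * n)) |
          ∃ k ∈ Subgroup.centralizer {rho n},
            finRotate (2 * n) * k * (finRotate (2 * n))⁻¹ = x} : Set (Equiv.Perm (Fin (2 * n)))) ↔
    (∀ x, g (rho n x) = rho n (g x)) ∧ ∀ x, g (rho n (x - 1) + 1) = rho n (g x - 1) + 1 := by
  have hb : ∀ x, finRotate (2 * n) x = x + 1 := fun x => finRotate_apply x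
  have hb' : ∀ x, (finRotate (2 * n))⁻¹ x = x - 1 := fun x => by
    rw [Equiv.Perm.inv_eq_iff_eq, hb, sub_add_cancel]
  rw [Set.mem_inter_iff, SetLike.mem_coe, Subgroup.mem_centralizer_singleton_iff, Set.mem_ofPred_eq]
  refine and_congr ?_ ?_
  · rw [Equiv.ext_iff]
    simp only [Equiv.Perm.mul_apply]
  · constructor
    · rintro ⟨k, hk, rfl⟩ x
      rw [Subgroup.mem_centralizer_singleton_iff, Equiv.ext_iff] at hk
      simp only [Equiv.Perm.mul_apply] at hk
      simp only [Equiv.Perm.mul_apply, hb, hb', add_sub_cancel_right, hk]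
    · intro h
      refine ⟨(finRotate (2 * n))⁻¹ * g * finRotate (2 * n), ?_, by group⟩
      rw [Subgroup.mem_centralizer_singleton_iff, Equiv.ext_iff]
      intro x
      have := h (x + 1)
      rw [add_sub_cancel_right] at this
      simp only [Equiv.Perm.mul_apply, hb, hb', this, add_sub_cancel_right]

theorem inj_aux (n : ℕ) [NeZero (2 * n)] (g h : Equiv.Perm (Fin (2 * n)))
    (hg : (∀ x, g (rho n x) = rho n (g x)) ∧ ∀ x, g (rho n (x - 1) + 1) = rho n (g x - 1) + 1)
    (hh : (∀ x, h (rho n x) = rho n (h x)) ∧ ∀ x, h (rho n (x - 1) + 1) = rho n (h x - 1) + 1)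
    (h0 : g 0 = h 0) : g = h := by
  have key : ∀ k : ℕ, ∀ hk : k < 2 * n, g ⟨k, hk⟩ = h ⟨k, hk⟩ := by
    intro k
    induction k with
    | zero => intro hk; exact h0
    | succ k ih =>
      intro hk
      have ih := ih (by omega)
      have e : (⟨k + 1, hk⟩ : Fin (2 * n)) = ⟨k, by omega⟩ + 1 := by
        apply Fin.ext
        rw [Fin.val_add, one_val]
        exact (Nat.mod_eq_of_lt hk).symm
      rw [e]
      generalize hx : (⟨k, by omega⟩ : Fin (2 * n)) = x at ih ⊢
      rcases Nat.mod_two_eq_zero_or_one x.val with p | p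
      · rw [← rho_even n x p, hg.1, hh.1, ih]
      · have q : rho n (x - 1) = x := by
          rw [rho_even n _ (by rw [par_sub, one_val]; omega), sub_add_cancel]
        have a := hg.2 x
        have b := hh.2 x
        rw [q] at a b
        rw [a, b, ih]
  ext1 x
  exact key x.val x.isLt

theorem surj_aux (n : ℕ) [NeZero (2 * n)] (a : Fin (2 * n)) :
    ∃ g : Equiv.Perm (Fin (2 * n)), ((∀ x, g (rho n x) = rho n (g x)) ∧
      ∀ x, g (rho n (x - 1) + 1) = rho n (g x - 1) + 1) ∧ g 0 = a := by
  rcases Nat.mod_two_eq_zero_or_one a.val with p | p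
  · refine ⟨Equiv.addRight a, ⟨fun x => ?_, fun x => ?_⟩, by simp⟩ <;>
    · have pa := par_add n x a
      simp only [Equiv.coe_addRight, rho_eq, par_add, par_sub, one_val]
      split_ifs <;> first | (exfalso; omega) | abel
  · refine ⟨Equiv.subLeft a, ⟨fun x => ?_, fun x => ?_⟩, by simp⟩ <;>
    · have pa := par_sub n a x
      simp only [Equiv.subLeft_apply, rho_eq, par_add, par_sub, one_val]
      split_ifs <;> first | (exfalso; omega) | abel

/-- The intersection of the centralizer C_ρ with its conjugate β·C_ρ·β⁻¹ by the
2n-cycle β has exactly 2n elements (it is the dihedral group of order 2n). -/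
theorem card_centralizer_inter_conj (n : ℕ) (hn : 1 ≤ n) :
    Nat.card
      ((Subgroup.centralizer {rho n} : Set (Equiv.Perm (Fin (2 * n)))) ∩
        {x : Equiv.Perm (Fin (2 * n)) |
          ∃ k ∈ Subgroup.centralizer {rho n},
            finRotate (2 * n) * k * (finRotate (2 * n))⁻¹ = x} : Set (Equiv.Perm (Fin (2 * n))))
      = 2 * n := by
  haveI : NeZero (2 * n) := ⟨by omega⟩
  refine (Nat.card_eq_of_bijective (fun g => g.1 0) ⟨?_, ?_⟩).trans (Nat.card_fin (2 * n))
  · rintro ⟨g, hg⟩ ⟨h, hh⟩ e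
    exact Subtype.ext (inj_aux n g h ((mem_char n g).1 hg) ((mem_char n h).1 hh) e)
  · intro a
    obtain ⟨g, hg, e⟩ := surj_aux n a
    exact ⟨⟨g, (mem_char n g).2 hg⟩, e⟩
end

section
/- Let n ≥ 1 and let σ ∈ S_{4n} be any permutation that is a product of n disjoint 4-cycles. Then the number of permutations τ ∈ S_{4n} that are products of 2n disjoint transpositions and such that σ²·τ is a product of two disjoint 2n-cycles equals (4n−2)!! = 2^{2n−1}·(2n−1)!. -/
open Equiv Equiv.Perm

def Per {X : Type*} (k : ℕ) (π : Equiv.Perm X) : Prop :=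
  ∀ (x : X) (i : ℤ), (π ^ i) x = x ↔ (k : ℤ) ∣ i

theorem zpow_apply_self_iff {X : Type*} [Fintype X] [DecidableEq X] (π : Equiv.Perm X)
    (x : X) (hx : π x ≠ x) (i : ℤ) :
    (π ^ i) x = x ↔ ((π.cycleOf x).support.card : ℤ) ∣ i := by
  have h := zpow_eq_zpow_on_iff π (m := i) (n := 0) hx
  rw [zpow_zero, Perm.one_apply, Int.zero_emod] at h
  rw [h, Int.dvd_iff_emod_eq_zero]

theorem per_iff {X : Type*} [Fintype X] [DecidableEq X] (π : Equiv.Perm X) (c k : ℕ)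
    (hk : 2 ≤ k) (hX : Fintype.card X = c * k) :
    π.cycleType = Multiset.replicate c k ↔ Per k π := by
  constructor
  · intro h x i
    have hs : π.support = Finset.univ := by
      rw [← Finset.card_eq_iff_eq_univ, ← sum_cycleType, h, hX]
      simp
    have hx : π x ≠ x := by
      rw [← mem_support, hs]; simp
    rw [zpow_apply_self_iff π x hx]
    have : (π.cycleOf x).support.card ∈ π.cycleType := by
      rw [cycleType_def, Multiset.mem_map]
      exact ⟨π.cycleOf x, by simpa [cycleOf_mem_cycleFactorsFinset_iff] using hx, rfl⟩
    rw [h] at this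
    rw [Multiset.eq_of_mem_replicate this]
  · intro h
    have hx : ∀ x, π x ≠ x := by
      intro x hx
      have := (h x 1).1 (by simpa using hx)
      have := Int.le_of_dvd (by norm_num) this
      omega
    have h1 : π.cycleType = Multiset.replicate (Multiset.card π.cycleType) k := by
      rw [Multiset.eq_replicate]
      refine ⟨rfl, ?_⟩
      intro b hb
      rw [cycleType_def, Multiset.mem_map] at hb
      obtain ⟨f, hf, rfl⟩ := hb
      have hf' : f ∈ π.cycleFactorsFinset := hf
      obtain ⟨x, hxf⟩ := ((mem_cycleFactorsFinset_iff.1 hf').1).nonempty_support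
      have := cycle_is_cycleOf hxf hf'
      subst this
      have e : ∀ i : ℤ, ((π.cycleOf x).support.card : ℤ) ∣ i ↔ (k : ℤ) ∣ i := fun i => by
        rw [← zpow_apply_self_iff π x (hx x), h x i]
      have a1 := (e _).1 dvd_rfl
      have a2 := (e _).2 dvd_rfl
      exact Nat.dvd_antisymm (by exact_mod_cast a2) (by exact_mod_cast a1)
    have hs : π.support = Finset.univ := by
      ext x; simpa using hx x
    have h2 := sum_cycleType π
    rw [hs, Finset.card_univ, hX, h1] at h2
    simp at h2
    rw [h1, h2.resolve_right (by omega)]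

theorem Per.conj {X Y : Type*} {k : ℕ} {π : Equiv.Perm X} (h : Per k π) (e : X ≃ Y) :
    Per k (e.permCongr π) := by
  intro y i
  have : (e.permCongr π) ^ i = e.permCongr (π ^ i) := (map_zpow e.permCongrHom π i).symm
  rw [this, Equiv.permCongr_apply, ← h (e.symm y) i, Equiv.apply_eq_iff_eq_symm_apply]

theorem per_mulLeft {G : Type*} [Group G] (g : G) : Per (orderOf g) (Equiv.mulLeft g) := by
  intro x i
  have : (Equiv.mulLeft g) ^ i = Equiv.mulLeft (g ^ i) := (map_zpow (MulAction.toPermHom G G) g i).symm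
  rw [this, orderOf_dvd_iff_zpow_eq_one]
  simp

open DihedralGroup

/-- the coset of equivariant bijections -/
abbrev EE {X : Type*} (m : ℕ) (α : Equiv.Perm X) : Type _ :=
  {e : DihedralGroup m ≃ X // ∀ y, e (sr 0 * y) = α (e y)}

theorem card_EE {X : Type*} [Fintype X] [DecidableEq X] (m : ℕ) [NeZero m] (α : Equiv.Perm X)
    (hX : Fintype.card X = m * 2) (hα : Per 2 α) :
    Nat.card (EE m α) = 2 ^ m * m.factorial := by
  have hα' := (per_iff α m 2 le_rfl hX).2 hα
  have e1 : DihedralGroup m ≃ X := Fintype.equivOfCardEq (by rw [hX, DihedralGroup.card, mul_comm])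
  have hp : Per 2 (e1.permCongr (Equiv.mulLeft (sr 0 : DihedralGroup m))) := by
    have := (per_mulLeft (sr 0 : DihedralGroup m)).conj e1
    rwa [orderOf_sr] at this
  obtain ⟨c, hc⟩ := isConj_iff.1 (isConj_iff_cycleType_eq.2
    (((per_iff _ m 2 le_rfl hX).2 hp).trans hα'.symm))
  let e0 : DihedralGroup m ≃ X := e1.trans c
  have he0 : ∀ y, e0 (sr 0 * y) = α (e0 y) := by
    intro y
    rw [← hc]
    simp [e0]
  have key : Nat.card (Subgroup.centralizer {α}) = Nat.card (EE m α) := by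
    refine Nat.card_congr (Equiv.ofBijective
      (fun g => (⟨e0.trans g.1, fun y => ?_⟩ : EE m α)) ⟨?_, ?_⟩)
    · have := Subgroup.mem_centralizer_singleton_iff.1 g.2
      have := Equiv.congr_fun this (e0 y)
      simp only [Perm.mul_apply] at this
      simp [he0, this]
    · intro g h hgh
      have := congrArg Subtype.val hgh
      ext x
      have := Equiv.congr_fun this (e0.symm x)
      simpa using this
    · rintro ⟨e, he⟩
      refine ⟨⟨e0.symm.trans e, ?_⟩, ?_⟩
      · rw [Subgroup.mem_centralizer_singleton_iff]
        ext x
        obtain ⟨y, rfl⟩ := e0.surjective x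
        simp [← he0, he]
      · apply Subtype.ext
        ext y
        simp
  rw [← key, Equiv.Perm.nat_card_centralizer, hα']
  have : m ≠ 0 := NeZero.ne m
  simp [Multiset.toFinset_replicate, this, hX]

theorem zpow_sr {G : Type*} [Group G] {α ρ : G} (h : ρ * α = α * ρ⁻¹) (i : ℤ) :
    ρ ^ i * α = α * ρ ^ (-i) := by
  have : SemiconjBy α ρ⁻¹ ρ := h.symm
  have := this.zpow_right i
  rw [zpow_neg, ← inv_zpow]
  exact this.symm

theorem per_sq {X : Type*} {α : Equiv.Perm X} (h : Per 2 α) : α * α = 1 := by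
  ext x
  have := (h x 2).2 (by norm_num)
  simpa [sq] using this

theorem per_ne {X : Type*} {α : Equiv.Perm X} (h : Per 2 α) (x : X) : α x ≠ x := by
  intro hx
  have := (h x 1).1 (by simpa using hx)
  norm_num at this

theorem surj_aux_s9 {X : Type*} [Fintype X] (m : ℕ) [NeZero m] (α τ : Equiv.Perm X)
    (hX : Fintype.card X = m * 2) (hα : Per 2 α) (hτ : Per 2 τ) (hρ : Per m (α * τ)) (x : X) :
    ∃ e : EE m α, (e.1.permCongr (Equiv.mulLeft (sr 1 : DihedralGroup m))) = τ ∧ e.1 1 = x := by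
  set ρ := α * τ with hρd
  have a2 := per_sq hα
  have t2 := per_sq hτ
  have hαi : α⁻¹ = α := inv_eq_of_mul_eq_one_left a2
  have hτi : τ⁻¹ = τ := inv_eq_of_mul_eq_one_left t2
  have hra : ρ * α = α * ρ⁻¹ := by
    rw [hρd, mul_inv_rev, hαi, hτi, mul_assoc]
  have hτρ : τ = α * ρ := by rw [hρd, ← mul_assoc, a2, one_mul]
  have hz := zpow_sr hra
  have hcong : ∀ a b : ℤ, (a : ZMod m) = b → ρ ^ a = ρ ^ b := by
    intro a b hab
    have h1 : (m : ℤ) ∣ a - b := by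
      rw [← ZMod.intCast_zmod_eq_zero_iff_dvd] 
      push_cast; rw [hab, sub_self]
    ext y
    have := (hρ ((ρ ^ b) y) (a - b)).2 h1
    rw [← Perm.mul_apply, ← zpow_add, sub_add_cancel] at this
    exact this
  have hinj : ∀ a b : ℤ, (ρ ^ a) x = (ρ ^ b) x → (a : ZMod m) = b := by
    intro a b hab
    have : (ρ ^ (a - b)) x = x := by
      rw [sub_eq_neg_add, zpow_add, Perm.mul_apply, hab, ← Perm.mul_apply, ← zpow_add]; simp
    have := (hρ _ _).1 this
    rw [← ZMod.intCast_zmod_eq_zero_iff_dvd] at this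
    push_cast at this
    exact sub_eq_zero.1 this
  -- α x is not in the ρ-orbit
  have hnot : ∀ i : ℤ, (ρ ^ i) x ≠ α x := by
    intro i hi
    rcases Int.even_or_odd' i with ⟨j, rfl | rfl⟩
    · apply per_ne hα ((ρ ^ j) x)
      have h1 : α * ρ ^ j = ρ ^ (-j) * α := by rw [hz]; simp
      rw [← Perm.mul_apply, h1, Perm.mul_apply, ← hi, ← Perm.mul_apply, ← zpow_add]
      congr 2; ring
    · apply per_ne hτ ((ρ ^ j) x)
      have h1 : τ * ρ ^ j = ρ ^ (-(j+1)) * α := by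
        rw [hz, hτρ, mul_assoc, ← zpow_one_add]; congr 2; ring
      rw [← Perm.mul_apply, h1, Perm.mul_apply, ← hi, ← Perm.mul_apply, ← zpow_add]
      congr 2; ring
  let F : DihedralGroup m → X := fun y => match y with
    | r i => (ρ ^ (i.cast : ℤ)) x
    | sr i => α ((ρ ^ (i.cast : ℤ)) x)
  have hne : ∀ i j : ℤ, (ρ ^ i) x ≠ α ((ρ ^ j) x) := by
    intro i j hij
    have h1 : α * ρ ^ j = ρ ^ (-j) * α := by rw [hz]; simp
    rw [← Perm.mul_apply, h1, Perm.mul_apply] at hij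
    apply hnot (j + i)
    rw [zpow_add, Perm.mul_apply, hij, ← Perm.mul_apply, ← zpow_add]; simp
  have hFi : Function.Injective F := by
    intro y z hyz
    rcases y with i | i <;> rcases z with j | j <;> simp only [F] at hyz
    · have := hinj _ _ hyz
      simp at this; rw [this]
    · exact absurd hyz (hne _ _)
    · exact absurd hyz.symm (hne _ _)
    · have := hinj _ _ (α.injective hyz)
      simp at this; rw [this]
  have hFb : Function.Bijective F := by
    rw [Fintype.bijective_iff_injective_and_card]
    exact ⟨hFi, by rw [hX, DihedralGroup.card, mul_comm]⟩
  have hFα : ∀ y, F (sr 0 * y) = α (F y) := by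
    rintro (i | i)
    · simp [F]
    · simp only [sr_mul_sr, sub_zero, F]
      rw [← Perm.mul_apply, a2]; rfl
  have hFτ : ∀ y, F (sr 1 * y) = τ (F y) := by
    rintro (i | i)
    · simp only [sr_mul_r, F]
      rw [hcong _ (1 + (i.cast : ℤ)) (by simp), hτρ, zpow_one_add]; rfl
    · simp only [sr_mul_sr, F]
      rw [hcong _ (-1 + (i.cast : ℤ)) (by simp; ring), hτρ, zpow_add]
      have : α * ρ * α = ρ⁻¹ := by rw [mul_assoc, hra, ← mul_assoc, a2, one_mul]
      rw [zpow_neg_one, ← this]; rfl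
  refine ⟨⟨Equiv.ofBijective F hFb, hFα⟩, ?_, ?_⟩
  · ext z
    obtain ⟨y, rfl⟩ := hFb.2 z
    rw [Equiv.permCongr_apply]
    have : (Equiv.ofBijective F hFb).symm (F y) = y := Equiv.ofBijective_symm_apply_apply F hFb y
    simp only [this]
    exact hFτ y
  · change (ρ ^ ((0 : ZMod m).cast : ℤ)) x = x
    simp only [ZMod.cast_zero, zpow_zero, Perm.one_apply]

theorem card_T {X : Type*} [Fintype X] (m : ℕ) (hm : 2 ≤ m) (α : Equiv.Perm X)
    (hX : Fintype.card X = m * 2) (hα : Per 2 α) :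
    Nat.card {τ : Equiv.Perm X | Per 2 τ ∧ Per m (α * τ)} = 2 ^ (m - 1) * (m - 1).factorial := by
  classical
  have : NeZero m := ⟨by omega⟩
  have key : Nat.card (EE m α) = Nat.card ({τ : Equiv.Perm X | Per 2 τ ∧ Per m (α * τ)} × X) := by
    refine Nat.card_congr (Equiv.ofBijective (fun e =>
      (⟨e.1.permCongr (Equiv.mulLeft (sr 1)), ?_, ?_⟩, e.1 1)) ⟨?_, ?_⟩)
    · have := (per_mulLeft (sr 1 : DihedralGroup m)).conj e.1
      rwa [orderOf_sr] at this
    · have := (per_mulLeft (r 1 : DihedralGroup m)).conj e.1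
      rw [orderOf_r_one] at this
      convert this using 1
      ext z
      obtain ⟨y, rfl⟩ := e.1.surjective z
      simp [← e.2, ← mul_assoc]
    · intro e f hef
      simp only [Prod.mk.injEq, Subtype.mk.injEq] at hef
      obtain ⟨h1, h2⟩ := hef
      have hs : ∀ y, e.1 y = f.1 y → e.1 (sr 1 * y) = f.1 (sr 1 * y) := by
        intro y hy
        have := Equiv.congr_fun h1 (e.1 y)
        conv_rhs at this => rw [hy]
        simpa using this
      have h0 : ∀ y, e.1 y = f.1 y → e.1 (sr 0 * y) = f.1 (sr 0 * y) := by
        intro y hy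
        rw [e.2, f.2, hy]
      have hr : ∀ k : ℕ, e.1 (r k) = f.1 (r k) := by
        intro k
        induction k with
        | zero => simpa using h2
        | succ k ih =>
          have := h0 _ (hs _ ih)
          simpa [add_comm] using this
      have hr' : ∀ i : ZMod m, e.1 (r i) = f.1 (r i) := by
        intro i
        have := hr i.val
        simpa using this
      apply Subtype.ext
      ext y
      rcases y with i | i
      · exact hr' i
      · have := h0 _ (hr' i)
        simpa using this
    · rintro ⟨⟨τ, h1, h2⟩, x⟩
      obtain ⟨e, he, hx⟩ := surj_aux_s9 m α τ hX hα h1 h2 x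
      exact ⟨e, by simp [he, hx]⟩
  rw [card_EE m α hX hα, Nat.card_prod, Nat.card_eq_fintype_card (α := X), hX] at key
  obtain ⟨k, rfl⟩ : ∃ k, m = k + 1 := ⟨m - 1, by omega⟩
  rw [pow_succ, Nat.factorial_succ] at key
  apply Nat.eq_of_mul_eq_mul_right (show 0 < (k + 1) * 2 by omega)
  rw [← key]
  simp only [Nat.add_sub_cancel]
  ring

/-- For σ a product of n disjoint 4-cycles in the symmetric group on `Fin (4n)`, the
number of products τ of 2n disjoint transpositions such that σ²·τ is a product of two
disjoint 2n-cycles equals `(4n-2)!! = 2^(2n-1)·(2n-1)!`. -/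
theorem card_Xprime (n : ℕ) (hn : 1 ≤ n) (σ : Equiv.Perm (Fin (4 * n)))
    (hσ : σ.cycleType = Multiset.replicate n 4) :
    Nat.card {τ : Equiv.Perm (Fin (4 * n)) |
        τ.cycleType = Multiset.replicate (2 * n) 2 ∧
        (σ ^ 2 * τ).cycleType = {2 * n, 2 * n}}
      = 2 ^ (2 * n - 1) * (2 * n - 1).factorial := by
  have h4 := (per_iff σ n 4 (by norm_num) (by simp [mul_comm])).1 hσ
  have h2 : Per 2 (σ ^ 2) := by
    intro x i
    have : (σ ^ 2) ^ i = σ ^ (2 * i) := by rw [zpow_mul]; rfl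
    rw [this, h4 x]
    push_cast
    omega
  rw [← card_T (2 * n) (by omega) (σ ^ 2) (by simp; ring) h2]
  have hrep : ({2 * n, 2 * n} : Multiset ℕ) = Multiset.replicate 2 (2 * n) := rfl
  congr 2
  ext τ
  rw [hrep, Set.mem_ofPred_eq, Set.mem_ofPred_eq, per_iff τ (2 * n) 2 le_rfl (by simp; ring),
    per_iff (σ ^ 2 * τ) 2 (2 * n) (by omega) (by simp; ring)]
end

section
/- (Swap is never a symmetry) Let n ≥ 1, and in S_{2n} let ρ be the involution pairing 2k with 2k+1, C_ρ its centralizer, and β the 2n-cycle x ↦ x+1 (mod 2n). Then for every σ ∈ β·C_ρ and every integer p, one has β^{2p}·σ·β^{−2p} ≠ β⁻¹·ρ·σ⁻¹·β; in other words, no element of the coset U = β·C_ρ is conjugate by a power of β² to its swap image σ_s = β⁻¹·ρ·σ⁻¹·β. -/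
namespace SwapAux

lemma rot_val (N : ℕ) (x : Fin N) :
    (finRotate N x).val = if x.val + 1 = N then 0 else x.val + 1 := by
  cases N with
  | zero => exact x.elim0
  | succ N =>
    have hx := x.isLt
    rw [finRotate_apply, Fin.val_add_one]
    simp only [Fin.ext_iff, Fin.val_last]
    split_ifs <;> omega

lemma rot_val2 (N : ℕ) (x : Fin N) :
    (x.val + 1 = N ∧ (finRotate N x).val = 0) ∨
      (x.val + 1 ≠ N ∧ (finRotate N x).val = x.val + 1) := by
  by_cases h : x.val + 1 = N
  · exact Or.inl ⟨h, by rw [rot_val, if_pos h]⟩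
  · exact Or.inr ⟨h, by rw [rot_val, if_neg h]⟩

lemma rho_val (n : ℕ) (x : Fin (2 * n)) :
    (rho n x).val = if x.val % 2 = 0 then x.val + 1 else x.val - 1 := rfl

lemma rho_sq (n : ℕ) : rho n ^ 2 = 1 := by
  ext x
  rw [pow_two, Equiv.Perm.mul_apply, rho_val, rho_val, Equiv.Perm.one_apply]
  split_ifs <;> omega

lemma rho_ne (n : ℕ) (x : Fin (2 * n)) : rho n x ≠ x := by
  intro h
  have := congrArg Fin.val h
  rw [rho_val] at this
  split_ifs at this <;> omega

lemma sign_rho (n : ℕ) : Equiv.Perm.sign (rho n) = (-1) ^ n := by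
  have h : IsEmpty (Function.fixedPoints (rho n)) := ⟨fun x => rho_ne n x.1 x.2⟩
  rw [Equiv.Perm.sign_of_pow_two_eq_one (rho_sq n), Fintype.card_eq_zero (α := Function.fixedPoints (rho n))]
  simp

/-- block map -/
def q (n : ℕ) (x : Fin (2 * n)) : Fin n := ⟨x.val / 2, by omega⟩

lemma q_eq (n : ℕ) (x y : Fin (2 * n)) : q n x = q n y ↔ y = x ∨ y = rho n x := by
  simp only [q, Fin.ext_iff, rho_val]
  split_ifs <;> omega

lemma q_surj (n : ℕ) : Function.Surjective (q n) := by
  intro k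
  exact ⟨⟨2 * k.val, by omega⟩, by simp [q]⟩

/-- compatibility -/
def R (n : ℕ) (g : Equiv.Perm (Fin (2 * n))) (g' : Equiv.Perm (Fin n)) : Prop :=
  ∀ x, q n (g x) = g' (q n x)

lemma R_mul {n : ℕ} {g h g' h'} (a : R n g g') (b : R n h h') : R n (g * h) (g' * h') := by
  intro x
  simp only [Equiv.Perm.mul_apply]
  rw [a, b]

lemma R_inv {n : ℕ} {g g'} (a : R n g g') : R n g⁻¹ g'⁻¹ := by
  intro x
  rw [Equiv.Perm.eq_inv_iff_eq, ← a]
  simp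

lemma R_pow {n : ℕ} {g g'} (a : R n g g') (k : ℕ) : R n (g ^ k) (g' ^ k) := by
  induction k with
  | zero => intro x; simp
  | succ k ih => rw [pow_succ, pow_succ]; exact R_mul ih a

lemma R_zpow {n : ℕ} {g g'} (a : R n g g') (k : ℤ) : R n (g ^ k) (g' ^ k) := by
  cases k with
  | ofNat k => simpa using R_pow a k
  | negSucc k => rw [zpow_negSucc, zpow_negSucc]; exact R_inv (R_pow a _)

lemma R_unique {n : ℕ} {g g' g''} (a : R n g g') (b : R n g g'') : g' = g'' := by
  ext1 y
  obtain ⟨x, rfl⟩ := q_surj n y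
  rw [← a, ← b]

lemma R_rho (n : ℕ) : R n (rho n) 1 := by
  intro x
  rw [Equiv.Perm.one_apply, eq_comm, q_eq]
  exact Or.inr rfl

lemma R_rot (n : ℕ) : R n (finRotate (2 * n) ^ 2) (finRotate n) := by
  intro x
  have hx := x.isLt
  have h1 := rot_val2 _ x
  have h2 := rot_val2 _ (finRotate (2 * n) x)
  have h3 := rot_val2 _ (q n x)
  have e1 : (q n x).val = x.val / 2 := rfl
  rw [pow_two, Equiv.Perm.mul_apply, Fin.ext_iff]
  change (finRotate (2 * n) (finRotate (2 * n) x)).val / 2 = _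
  omega

lemma R_exists {n : ℕ} {g : Equiv.Perm (Fin (2 * n))} (h : rho n * g = g * rho n) :
    ∃ g', R n g g' := by
  have hc : ∀ x, rho n (g x) = g (rho n x) := fun x => by
    simpa using congrArg (fun f : Equiv.Perm _ => f x) h
  have hq : ∀ x y, q n x = q n y → q n (g x) = q n (g y) := by
    intro x y hxy
    rw [q_eq] at hxy ⊢
    rcases hxy with rfl | rfl
    · exact Or.inl rfl
    · exact Or.inr (hc x).symm
  choose s hs using q_surj n
  have hsurj : Function.Surjective (fun k => q n (g (s k))) := by
    intro y
    obtain ⟨z, rfl⟩ := q_surj n y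
    refine ⟨q n (g⁻¹ z), ?_⟩
    have := hq _ _ (hs (q n (g⁻¹ z)))
    simpa using this
  refine ⟨Equiv.ofBijective _ (Finite.surjective_iff_bijective.mp hsurj), ?_⟩
  intro x
  exact (hq _ _ (hs (q n x))).symm

lemma rho_comm_rot (n : ℕ) : Commute (rho n) (finRotate (2 * n) ^ 2) := by
  ext x
  have hx := x.isLt
  simp only [pow_two, Equiv.Perm.mul_apply, rho_val, rot_val]
  split_ifs <;> omega

end SwapAux

open SwapAux in
/-- No element σ of the coset U = β·C_ρ is conjugate by a power of β² to its swap
image σ_s = β⁻¹·ρ·σ⁻¹·β. -/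
theorem swap_never_symmetry (n : ℕ) (hn : 1 ≤ n) (σ : Equiv.Perm (Fin (2 * n)))
    (hσ : ∃ ξ ∈ Subgroup.centralizer {rho n}, σ = finRotate (2 * n) * ξ) (p : ℤ) :
    finRotate (2 * n) ^ (2 * p) * σ * (finRotate (2 * n) ^ (2 * p))⁻¹
      ≠ (finRotate (2 * n))⁻¹ * rho n * σ⁻¹ * finRotate (2 * n) := by
  rintro h
  obtain ⟨ξ, hξ, rfl⟩ := hσ
  have hc : rho n * ξ = ξ * rho n := by
    have := Subgroup.mem_centralizer_iff.mp hξ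
    exact this _ rfl
  rw [zpow_mul, zpow_ofNat] at h
  have hca := rho_comm_rot n
  have hR := R_rot n
  have hsa : Equiv.Perm.sign (finRotate (2 * n) ^ 2) = 1 := by
    rw [map_pow, Int.units_sq]
  have key : (finRotate (2 * n) ^ 2) ^ (2 * p + 1) *
      (((finRotate (2 * n) ^ 2) ^ (-p) * ξ) * ((finRotate (2 * n) ^ 2) ^ (-p) * ξ)) = rho n := by
    have hb : Commute (finRotate (2 * n)) ((finRotate (2 * n) ^ 2) ^ p) :=
      ((Commute.refl _).pow_right 2).zpow_right p
    have h2 : finRotate (2 * n) * ((finRotate (2 * n) ^ 2) ^ p * ξ * ((finRotate (2 * n) ^ 2) ^ p)⁻¹)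
        = (finRotate (2 * n))⁻¹ * (rho n * ξ⁻¹) := by
      calc _ = (finRotate (2 * n) ^ 2) ^ p * (finRotate (2 * n) * ξ) *
            ((finRotate (2 * n) ^ 2) ^ p)⁻¹ := by
            simp only [← mul_assoc]; rw [hb.eq]
        _ = _ := h
        _ = _ := by group
    have h3 := congrArg (fun t => finRotate (2 * n) * t * ξ) h2
    simp only [mul_assoc, mul_inv_cancel_left, inv_mul_cancel, mul_one] at h3
    rw [← h3]
    group
  have hce : rho n * ((finRotate (2 * n) ^ 2) ^ (-p) * ξ) =
      ((finRotate (2 * n) ^ 2) ^ (-p) * ξ) * rho n :=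
    ((hca.zpow_right (-p)).mul_right hc).eq
  generalize (finRotate (2 * n) ^ 2) ^ (-p) * ξ = η at key hce
  obtain ⟨η', hη⟩ := R_exists hce
  have k1 := R_mul (R_zpow hR (2 * p + 1)) (R_mul hη hη)
  rw [key] at k1
  have k2 := congrArg Equiv.Perm.sign (R_unique k1 (R_rho n))
  have k3 := congrArg Equiv.Perm.sign key
  rw [map_mul, map_zpow, hsa, map_mul, Int.units_mul_self, sign_rho] at k3
  rw [map_mul, map_zpow, map_mul, Int.units_mul_self, map_one] at k2
  obtain ⟨m, rfl⟩ : ∃ m, n = m + 1 := ⟨n - 1, by omega⟩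
  rw [sign_finRotate, zpow_add, zpow_mul, zpow_ofNat, Int.units_sq] at k2
  rw [pow_succ] at k3
  simp at k2 k3
  rw [k2] at k3
  exact absurd k3 (by decide)
end

section
/- Let n be odd, n ≥ 1, and in S_{2n} let ρ be the involution pairing 2k with 2k+1, C_ρ its centralizer, β the 2n-cycle x ↦ x+1 (mod 2n), and r the order-reversing involution x ↦ 2n−1−x. Then for every σ ∈ β·C_ρ and every integer p, one has β^{2p}·σ·β^{−2p} ≠ σ·ρ and β^{2p}·σ·β^{−2p} ≠ r·β⁻¹·ρ·σ⁻¹·β·r; in other words, no element of U = β·C_ρ is conjugate by a power of β² to its mirror image σ_m = σ·ρ, nor to its swap-reversal image σ_{sr} = r·β⁻¹·ρ·σ⁻¹·β·r. -/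
/-- The order-reversing involution `x ↦ 2n - 1 - x` of `Fin (2n)`. -/
def rev (n : ℕ) : Equiv.Perm (Fin (2 * n)) :=
  Function.Involutive.toPerm
    (fun x => ⟨2 * n - 1 - x.val, by have := x.isLt; omega⟩)
    (by
      intro x
      have hx := x.isLt
      apply Fin.ext
      dsimp only
      omega)

theorem sign_rho_of_odd (n : ℕ) (hodd : Odd n) : Equiv.Perm.sign (rho n) = -1 := by
  have key : Equiv.Perm.sign
      (Equiv.prodCongrRight (fun _ : Fin n => (Equiv.swap 0 1 : Equiv.Perm (Fin 2))))
      = Equiv.Perm.sign (rho n) := by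
    refine Equiv.Perm.sign_eq_sign_of_equiv _ _
      (finProdFinEquiv.trans (finCongr (Nat.mul_comm n 2))) ?_
    rintro ⟨k, b⟩
    apply Fin.ext
    have hval : ∀ x, (rho n x).val = if x.val % 2 = 0 then x.val + 1 else x.val - 1 :=
      fun _ => rfl
    rw [hval]
    fin_cases b <;> simp [finProdFinEquiv] <;> omega
  rw [← key, Equiv.Perm.sign_prodCongrRight]
  simp [hodd.neg_one_pow]

/-- For n odd, no element σ of the coset U = β·C_ρ is conjugate by a power of β² to
its mirror image σ_m = σ·ρ, nor to its swap-reversal image σ_{sr} = r·β⁻¹·ρ·σ⁻¹·β·r. -/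
theorem mirror_swapReversal_never_symmetry_odd (n : ℕ) (hn : 1 ≤ n) (hodd : Odd n)
    (σ : Equiv.Perm (Fin (2 * n)))
    (hσ : ∃ ξ ∈ Subgroup.centralizer {rho n}, σ = finRotate (2 * n) * ξ) (p : ℤ) :
    finRotate (2 * n) ^ (2 * p) * σ * (finRotate (2 * n) ^ (2 * p))⁻¹
        ≠ σ * rho n ∧
    finRotate (2 * n) ^ (2 * p) * σ * (finRotate (2 * n) ^ (2 * p))⁻¹
        ≠ rev n * (finRotate (2 * n))⁻¹ * rho n * σ⁻¹ * finRotate (2 * n) * rev n := by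
  have hr := sign_rho_of_odd n hodd
  have hne : ∀ u : ℤˣ, u ≠ -u := by decide
  constructor
  · intro h
    have h2 := congrArg Equiv.Perm.sign h
    rw [← MulAut.conj_apply] at h2
    simp only [Equiv.Perm.sign_mul, MulAut.conj_apply, Equiv.Perm.sign_inv, hr] at h2
    rw [mul_right_comm, Int.units_mul_self, one_mul, mul_neg_one] at h2
    exact hne _ h2
  · intro h
    have h2 := congrArg Equiv.Perm.sign h
    simp only [Equiv.Perm.sign_mul, Equiv.Perm.sign_inv, hr] at h2
    rw [mul_right_comm, Int.units_mul_self, one_mul] at h2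
    apply hne (Equiv.Perm.sign σ)
    rw [h2]
    generalize Equiv.Perm.sign (rev n) = a at *
    generalize Equiv.Perm.sign (finRotate (2 * n)) = b at *
    generalize Equiv.Perm.sign σ = c at *
    revert a b c
    decide
end

section
/- (Theorem 4, relation OOc = 2·OOb) Let n ≥ 1 and g ≥ 0. With U_g the set of genus-g elements of the coset U = β·C_ρ in S_{2n}, the number of equivalence classes of U_g under the equivalence relation generated by σ ≈ β²·σ·β⁻² is exactly twice the number of equivalence classes of U_g under the equivalence relation generated by σ ≈ β²·σ·β⁻² together with σ ≈ β⁻¹·ρ·σ⁻¹·β (swap). -/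
/-- The number of cycles of a permutation of `Fin (2n)`, counting fixed points. -/
def numCycles (n : ℕ) (x : Equiv.Perm (Fin (2 * n))) : ℕ :=
  Multiset.card x.cycleType + (2 * n - x.support.card)

/-- The genus-`g` part of the coset `U = β·C_ρ`. -/
def Ugen (n g : ℕ) : Set (Equiv.Perm (Fin (2 * n))) :=
  {σ | (∃ ξ ∈ Subgroup.centralizer {rho n}, σ = finRotate (2 * n) * ξ) ∧
       numCycles n σ + numCycles n (σ * rho n) + 2 * g = n + 2}

/-- The number of equivalence classes of a set `s` of permutations under the smallest
equivalence relation identifying `σ` with `f σ` for every `f` in `F`. -/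
noncomputable def numClasses (n : ℕ) (s : Set (Equiv.Perm (Fin (2 * n))))
    (F : Set (Equiv.Perm (Fin (2 * n)) → Equiv.Perm (Fin (2 * n)))) : ℕ :=
  Nat.card (Quot (fun a b : s => ∃ f ∈ F, (b : Equiv.Perm (Fin (2 * n))) = f a))

/-- Conjugation by `β²`. -/
def conjB2 (n : ℕ) : Equiv.Perm (Fin (2 * n)) → Equiv.Perm (Fin (2 * n)) :=
  fun σ => finRotate (2 * n) ^ 2 * σ * (finRotate (2 * n) ^ 2)⁻¹

/-- The swap map `σ ↦ β⁻¹·ρ·σ⁻¹·β`. -/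
def swapMap (n : ℕ) : Equiv.Perm (Fin (2 * n)) → Equiv.Perm (Fin (2 * n)) :=
  fun σ => (finRotate (2 * n))⁻¹ * rho n * σ⁻¹ * finRotate (2 * n)

/-- The mirror map `σ ↦ σ·ρ`. -/
def mirrorMap (n : ℕ) : Equiv.Perm (Fin (2 * n)) → Equiv.Perm (Fin (2 * n)) :=
  fun σ => σ * rho n

namespace OO
open Equiv

lemma rot_val (n : ℕ) (i : Fin n) : (finRotate n i).val = (i.val + 1) % n := by
  cases n with
  | zero => exact i.elim0
  | succ k =>
    rw [finRotate_apply, Fin.val_add]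
    simp

lemma rho_val (n : ℕ) (x : Fin (2 * n)) :
    (rho n x).val = if x.val % 2 = 0 then x.val + 1 else x.val - 1 := rfl

lemma rho_sq (n : ℕ) : rho n * rho n = 1 := by
  ext x
  simp only [Perm.mul_apply, rho_val, Perm.one_apply]
  split_ifs <;> omega

lemma rot_sq_val (n : ℕ) (i : Fin (2 * n)) :
    ((finRotate (2 * n) ^ 2) i).val = if i.val + 2 < 2 * n then i.val + 2 else i.val + 2 - 2 * n := by
  have hi := i.isLt
  rw [pow_two, Perm.mul_apply, rot_val, rot_val, Nat.mod_add_mod]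
  split_ifs with h
  · exact Nat.mod_eq_of_lt h
  · rw [show i.val + 1 + 1 = i.val + 2 from rfl, Nat.mod_eq_sub_mod (by omega)]
    exact Nat.mod_eq_of_lt (by omega)

lemma rot_sq_comm (n : ℕ) : Commute (finRotate (2 * n) ^ 2) (rho n) := by
  ext x
  have hx := x.isLt
  simp only [Perm.mul_apply, rho_val, rot_sq_val]
  split_ifs <;> omega

/-- block map -/
def blk (n : ℕ) (x : Fin (2 * n)) : Fin n := ⟨x.val / 2, by have := x.isLt; omega⟩

/-- block section -/
def sec (n : ℕ) (i : Fin n) : Fin (2 * n) := ⟨2 * i.val, by have := i.isLt; omega⟩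

lemma blk_sec (n : ℕ) (i : Fin n) : blk n (sec n i) = i := by
  apply Fin.ext; simp [blk, sec]

lemma blk_rho (n : ℕ) (x : Fin (2 * n)) : blk n (rho n x) = blk n x := by
  apply Fin.ext
  simp only [blk, rho_val]
  split_ifs <;> omega

lemma blk_eq (n : ℕ) (x y : Fin (2 * n)) (h : blk n x = blk n y) : x = y ∨ x = rho n y := by
  have h' : x.val / 2 = y.val / 2 := congrArg Fin.val h
  by_cases hxy : x = y
  · exact Or.inl hxy
  · right
    apply Fin.ext
    have : x.val ≠ y.val := fun h => hxy (Fin.ext h)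
    rw [rho_val]
    split_ifs <;> omega

lemma blk_rot (n : ℕ) (x : Fin (2 * n)) :
    blk n ((finRotate (2 * n) ^ 2) x) = finRotate n (blk n x) := by
  apply Fin.ext
  have hx := x.isLt
  rw [rot_val]
  simp only [blk, rot_sq_val]
  split_ifs with h
  · rw [Nat.mod_eq_of_lt (by omega)]; omega
  · rw [show x.val / 2 + 1 = n by omega, Nat.mod_self]; omega

/-- pairs of compatible permutations -/
def compat (n : ℕ) : Subgroup (Perm (Fin (2 * n)) × Perm (Fin n)) where
  carrier := {p | ∀ x, blk n (p.1 x) = p.2 (blk n x)}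
  one_mem' := fun x => rfl
  mul_mem' := by
    intro a b ha hb x
    simp only [Prod.fst_mul, Prod.snd_mul, Perm.mul_apply]
    rw [ha, hb]
  inv_mem' := by
    intro a ha x
    simp only [Prod.fst_inv, Prod.snd_inv]
    rw [Perm.eq_inv_iff_eq, ← ha]; simp

lemma blk_rot_zpow (n : ℕ) (j : ℤ) (x : Fin (2 * n)) :
    blk n (((finRotate (2 * n) ^ 2) ^ j) x) = (finRotate n ^ j) (blk n x) := by
  have h : ((finRotate (2 * n) ^ 2, finRotate n) : Perm (Fin (2 * n)) × Perm (Fin n)) ∈ compat n :=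
    blk_rot n
  exact (compat n).zpow_mem h j x

lemma blk_comm (n : ℕ) (τ : Perm (Fin (2 * n))) (h : Commute τ (rho n)) (x y : Fin (2 * n))
    (hxy : blk n x = blk n y) : blk n (τ x) = blk n (τ y) := by
  rcases blk_eq n x y hxy with rfl | rfl
  · rfl
  · have : τ (rho n y) = rho n (τ y) := congrArg (fun f : Perm (Fin (2 * n)) => f y) h.eq
    rw [this, blk_rho]

lemma exists_block (n : ℕ) (τ : Perm (Fin (2 * n))) (h : Commute τ (rho n)) :
    ∃ t : Perm (Fin n), ∀ x, blk n (τ x) = t (blk n x) := by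
  refine ⟨⟨fun i => blk n (τ (sec n i)), fun i => blk n (τ⁻¹ (sec n i)), ?_, ?_⟩, ?_⟩
  · intro i
    have := blk_comm n τ⁻¹ h.inv_left _ (τ (sec n i)) (blk_sec n (blk n (τ (sec n i))))
    simp only [this]; simp [blk_sec]
  · intro i
    have := blk_comm n τ h _ (τ⁻¹ (sec n i)) (blk_sec n (blk n (τ⁻¹ (sec n i))))
    simp only [this]; simp [blk_sec]
  · intro x
    exact blk_comm n τ h _ _ (blk_sec n _).symm

lemma sign_rho (n : ℕ) (hn : 1 ≤ n) : Perm.sign (rho n) = (-1) ^ n := by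
  have hsupp : (rho n).support = Finset.univ := by
    ext x
    simp only [Perm.mem_support, Finset.mem_univ, iff_true]
    intro h
    have := congrArg Fin.val h
    rw [rho_val] at this
    split_ifs at this <;> omega
  have hord : orderOf (rho n) = 2 := by
    apply orderOf_eq_prime
    · rw [pow_two, rho_sq]
    · intro h
      rw [h, Perm.support_one] at hsupp
      have : (⟨0, by omega⟩ : Fin (2 * n)) ∈ (∅ : Finset (Fin (2 * n))) := by
        rw [hsupp]; simp
      simp at this
  obtain ⟨k, hk⟩ := Perm.cycleType_prime_order (σ := rho n) (by rw [hord]; exact Nat.prime_two)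
  rw [hord] at hk
  have hs := Perm.sum_cycleType (rho n)
  rw [hsupp, hk] at hs
  simp at hs
  have : k + 1 = n := by omega
  rw [Perm.sign_of_cycleType, hk, this]
  simp only [Multiset.sum_replicate, Multiset.card_replicate, smul_eq_mul]
  rw [pow_add, mul_comm n 2, pow_mul]
  simp

lemma no_sqrt (n : ℕ) (hn : 1 ≤ n) (τ : Perm (Fin (2 * n))) (h : Commute τ (rho n)) (m : ℤ)
    (hm : Odd m) (hτ : τ * τ = (finRotate (2 * n) ^ 2) ^ m * rho n) : False := by
  rcases Nat.even_or_odd n with he | ho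
  · obtain ⟨t, ht⟩ := exists_block n τ h
    have key : t * t = finRotate n ^ m := by
      ext1 i
      rw [Perm.mul_apply]
      conv_lhs => rw [← blk_sec n i]
      rw [← ht, ← ht, ← Perm.mul_apply, hτ, Perm.mul_apply, blk_rot_zpow, blk_rho, blk_sec]
    have hs := congrArg Perm.sign key
    obtain ⟨k, rfl⟩ : ∃ k, n = k + 1 := ⟨n - 1, by omega⟩
    have hk : Odd k := by
      by_contra hk
      rw [Nat.not_odd_iff_even] at hk
      exact (Nat.not_even_iff_odd.mpr hk.add_one) he
    rw [map_mul, map_zpow, sign_finRotate, Nat.add_sub_cancel, hk.neg_one_pow, Int.units_mul_self] at hs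
    rw [hm.neg_one_zpow] at hs
    exact absurd hs (by decide)
  · have hs := congrArg Perm.sign hτ
    rw [map_mul, map_mul, map_zpow, map_pow, sign_rho n hn, ho.neg_one_pow, Int.units_mul_self,
      Int.units_sq, one_zpow] at hs
    exact absurd hs (by decide)

/-- membership in the coset -/
lemma mem_coset (n : ℕ) (σ : Perm (Fin (2 * n))) :
    (∃ ξ ∈ Subgroup.centralizer {rho n}, σ = finRotate (2 * n) * ξ) ↔
      Commute ((finRotate (2 * n))⁻¹ * σ) (rho n) := by
  constructor
  · rintro ⟨ξ, hξ, rfl⟩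
    rw [inv_mul_cancel_left]
    exact (Subgroup.mem_centralizer_iff.mp hξ (rho n) rfl).symm
  · intro h
    refine ⟨(finRotate (2 * n))⁻¹ * σ, ?_, by rw [mul_inv_cancel_left]⟩
    rw [Subgroup.mem_centralizer_iff]
    rintro x rfl
    exact h.eq.symm

lemma no_fix (n : ℕ) (hn : 1 ≤ n) (σ : Perm (Fin (2 * n)))
    (hσ : Commute ((finRotate (2 * n))⁻¹ * σ) (rho n)) (k : ℤ)
    (h : swapMap n σ = (finRotate (2 * n) ^ 2) ^ k * σ * ((finRotate (2 * n) ^ 2) ^ k)⁻¹) :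
    False := by
  have hc := rot_sq_comm n
  unfold swapMap at h
  generalize hβ : finRotate (2 * n) = β at *
  have hck : Commute ((β ^ 2) ^ k) (rho n) := hc.zpow_left k
  have hbk : Commute β ((β ^ 2) ^ k) := ((Commute.refl β).pow_right 2).zpow_right k
  apply no_sqrt n hn (((β ^ 2) ^ k)⁻¹ * (β⁻¹ * σ)) (hck.inv_left.mul_left hσ) (-(2 * k + 1))
    ⟨-k - 1, by ring⟩
  rw [hβ]
  have e1 : (β ^ 2) ^ (-(2 * k + 1)) = ((β ^ 2) ^ k)⁻¹ * ((β ^ 2) ^ k)⁻¹ * β⁻¹ * β⁻¹ := by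
    group
  rw [e1]
  generalize (β ^ 2) ^ k = B at *
  have h2 : rho n = β * B * σ * B⁻¹ * β⁻¹ * σ := by
    calc rho n = β * (β⁻¹ * rho n * σ⁻¹ * β) * β⁻¹ * σ := by group
      _ = _ := by rw [h]; group
  have hb1 : B⁻¹ * β⁻¹ = β⁻¹ * B⁻¹ := (hbk.inv_inv).eq.symm
  calc B⁻¹ * (β⁻¹ * σ) * (B⁻¹ * (β⁻¹ * σ)) = B⁻¹ * β⁻¹ * (σ * B⁻¹ * β⁻¹ * σ) := by group
    _ = B⁻¹ * β⁻¹ * (B⁻¹ * β⁻¹ * (β * B * σ * B⁻¹ * β⁻¹ * σ)) := by group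
    _ = B⁻¹ * (β⁻¹ * B⁻¹) * β⁻¹ * rho n := by rw [← h2]; group
    _ = _ := by rw [← hb1]; group

lemma numCycles_conj (n : ℕ) (τ σ : Perm (Fin (2 * n))) :
    numCycles n (τ * σ * τ⁻¹) = numCycles n σ := by
  simp [numCycles, Perm.cycleType_conj, Perm.card_support_conj]

lemma numCycles_inv (n : ℕ) (σ : Perm (Fin (2 * n))) :
    numCycles n σ⁻¹ = numCycles n σ := by
  simp [numCycles]

lemma rho_inv (n : ℕ) : (rho n)⁻¹ = rho n := inv_eq_of_mul_eq_one_left (rho_sq n)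

lemma conj_mem (n g : ℕ) (σ : Perm (Fin (2 * n))) (h : σ ∈ Ugen n g) : conjB2 n σ ∈ Ugen n g := by
  obtain ⟨h1, h2⟩ := h
  have hc := rot_sq_comm n
  refine ⟨?_, ?_⟩
  · rw [mem_coset] at h1 ⊢
    have : (finRotate (2 * n))⁻¹ * conjB2 n σ
      = finRotate (2 * n) ^ 2 * ((finRotate (2 * n))⁻¹ * σ) * (finRotate (2 * n) ^ 2)⁻¹ := by
      unfold conjB2; group
    rw [this]
    exact (hc.mul_left h1).mul_left hc.inv_left
  · have : conjB2 n σ * rho n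
        = finRotate (2 * n) ^ 2 * (σ * rho n) * (finRotate (2 * n) ^ 2)⁻¹ := by
      unfold conjB2
      rw [mul_assoc, hc.inv_left.eq]; group
    rw [this, numCycles_conj]
    unfold conjB2
    rw [numCycles_conj]
    exact h2

/-- The defining relation of the coset. -/
lemma coset_rel (n : ℕ) (σ : Perm (Fin (2 * n)))
    (h : Commute ((finRotate (2 * n))⁻¹ * σ) (rho n)) :
    σ⁻¹ * (finRotate (2 * n) * rho n * (finRotate (2 * n))⁻¹) = rho n * σ⁻¹ := by
  have := h.inv_left.eq
  rw [mul_inv_rev, inv_inv] at this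
  calc _ = (σ⁻¹ * finRotate (2 * n) * rho n) * (finRotate (2 * n))⁻¹ := by group
    _ = _ := by rw [this]; group

lemma swap_mem (n g : ℕ) (σ : Perm (Fin (2 * n))) (h : σ ∈ Ugen n g) : swapMap n σ ∈ Ugen n g := by
  obtain ⟨h1, h2⟩ := h
  rw [mem_coset] at h1
  have hc := rot_sq_comm n
  have hr := coset_rel n σ h1
  refine ⟨?_, ?_⟩
  · rw [mem_coset]
    unfold swapMap
    generalize finRotate (2 * n) = β at *
    have e : β⁻¹ * (β⁻¹ * rho n * σ⁻¹ * β) = (β ^ 2)⁻¹ * rho n * (β⁻¹ * σ)⁻¹ := by group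
    rw [e]
    exact (hc.inv_left.mul_left (Commute.refl _)).mul_left h1.inv_left
  · have e1 : numCycles n (swapMap n σ) = numCycles n (σ * rho n) := by
      have : swapMap n σ = (finRotate (2 * n))⁻¹ * (σ * rho n)⁻¹ * ((finRotate (2 * n))⁻¹)⁻¹ := by
        rw [mul_inv_rev, rho_inv, inv_inv]; rfl
      rw [this, numCycles_conj, numCycles_inv]
    have e2 : numCycles n (swapMap n σ * rho n) = numCycles n σ := by
      have : swapMap n σ * rho n = (finRotate (2 * n))⁻¹ * σ⁻¹ * ((finRotate (2 * n))⁻¹)⁻¹ := by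
        unfold swapMap
        generalize finRotate (2 * n) = β at *
        calc _ = β⁻¹ * rho n * (σ⁻¹ * (β * rho n * β⁻¹)) * β := by group
          _ = β⁻¹ * (rho n * rho n) * σ⁻¹ * β := by rw [hr]; group
          _ = _ := by rw [rho_sq]; group
      rw [this, numCycles_conj, numCycles_inv]
    rw [e1, e2]; omega

lemma conj_swap_swap (n : ℕ) (σ : Perm (Fin (2 * n)))
    (h : Commute ((finRotate (2 * n))⁻¹ * σ) (rho n)) :
    σ = conjB2 n (swapMap n (swapMap n σ)) := by
  have hr := coset_rel n σ h
  have hc := rot_sq_comm n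
  unfold conjB2 swapMap
  generalize finRotate (2 * n) = β at *
  have hr2 : (β * rho n * β⁻¹) * σ = σ * rho n := by
    have : σ * (σ⁻¹ * (β * rho n * β⁻¹)) * σ = σ * (rho n * σ⁻¹) * σ := by rw [hr]
    simpa [mul_assoc] using this
  symm
  calc β ^ 2 * (β⁻¹ * rho n * (β⁻¹ * rho n * σ⁻¹ * β)⁻¹ * β) * (β ^ 2)⁻¹
      = β * rho n * β⁻¹ * (σ * (rho n)⁻¹) := by group
    _ = (β * (rho n * rho n) * β⁻¹) * σ := by rw [rho_inv, ← hr2]; group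
    _ = σ := by rw [rho_sq]; group

lemma conj_swap_comm (n : ℕ) (σ : Perm (Fin (2 * n))) :
    swapMap n (conjB2 n σ) = conjB2 n (swapMap n σ) := by
  have hc := rot_sq_comm n
  unfold conjB2 swapMap
  have hb : Commute (finRotate (2 * n)) (finRotate (2 * n) ^ 2) := (Commute.refl _).pow_right 2
  generalize finRotate (2 * n) = β at *
  calc β⁻¹ * rho n * (β ^ 2 * σ * (β ^ 2)⁻¹)⁻¹ * β
      = β⁻¹ * (rho n * β ^ 2) * σ⁻¹ * β * (β ^ 2)⁻¹ := by group
    _ = _ := by rw [← hc.eq]; group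

/-- Abstract counting. -/
lemma count {X : Type*} [Finite X] (T S : X → X) (hST : ∀ x, T (S (S x)) = x)
    (hcomm : ∀ x, S (T x) = T (S x)) (r1 r2 : X → X → Prop)
    (hr1 : ∀ a b, r1 a b ↔ b = T a) (hr2 : ∀ a b, r2 a b ↔ b = T a ∨ b = S a)
    (hfix : ∀ x, Quot.mk r1 (S x) ≠ Quot.mk r1 x) :
    Nat.card (Quot r1) = 2 * Nat.card (Quot r2) := by
  classical
  let s : Quot r1 → Quot r1 := Quot.map S (by
    intro a b h
    rw [hr1] at h ⊢
    rw [h, hcomm])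
  have hs : ∀ a, s (Quot.mk r1 a) = Quot.mk r1 (S a) := fun a => rfl
  have hss : ∀ q, s (s q) = q := by
    rintro ⟨a⟩
    change Quot.mk r1 (S (S a)) = Quot.mk r1 a
    exact Quot.sound ((hr1 _ _).2 (hST a).symm)
  have hsne : ∀ q, s q ≠ q := by
    rintro ⟨a⟩
    exact hfix a
  let p : Quot r1 → Quot r2 := Quot.map id (by
    intro a b h
    exact (hr2 _ _).2 (Or.inl ((hr1 _ _).1 h)))
  have hps : ∀ q, p (s q) = p q := by
    rintro ⟨a⟩
    exact (Quot.sound ((hr2 _ _).2 (Or.inr rfl))).symm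
  have hp : ∀ a b, Relation.EqvGen r2 a b →
      (Quot.mk r1 b = Quot.mk r1 a ∨ Quot.mk r1 b = s (Quot.mk r1 a)) := by
    intro a b h
    induction h with
    | rel a b h =>
      rcases (hr2 _ _).1 h with h | h
      · left; exact (Quot.sound ((hr1 _ _).2 h)).symm
      · right; rw [h, hs]
    | refl a => left; rfl
    | symm a b _ ih =>
      rcases ih with ih | ih
      · left; exact ih.symm
      · right; rw [ih, hss]
    | trans a b c _ _ ih1 ih2 =>
      rcases ih1 with h1 | h1 <;> rcases ih2 with h2 | h2
      · left; rw [h2, h1]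
      · right; rw [h2, h1]
      · right; rw [h2, h1]
      · left; rw [h2, h1, hss]
  have hfib : ∀ q q', p q' = p q ↔ (q' = q ∨ q' = s q) := by
    intro q q'
    constructor
    · induction q using Quot.ind with | _ a
      induction q' using Quot.ind with | _ b
      intro h
      exact hp a b (Quot.eqvGen_exact (show Quot.mk r2 b = Quot.mk r2 a from h).symm)
    · rintro (rfl | rfl)
      · rfl
      · exact hps _
  have : Fintype (Quot r1) := Fintype.ofFinite _
  have : Fintype (Quot r2) := Fintype.ofFinite _
  rw [Nat.card_eq_fintype_card, Nat.card_eq_fintype_card, ← Finset.card_univ, ← Finset.card_univ,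
    Finset.card_eq_sum_card_fiberwise (f := p) (t := Finset.univ) (by intro x _; simp)]
  rw [Finset.sum_const_nat (m := 2), mul_comm]
  intro y _
  induction y using Quot.ind with | _ a
  have : (Finset.univ.filter (fun q => p q = Quot.mk r2 a)) = {Quot.mk r1 a, s (Quot.mk r1 a)} := by
    ext q
    simp only [Finset.mem_filter, Finset.mem_univ, true_and, Finset.mem_insert,
      Finset.mem_singleton]
    exact hfib (Quot.mk r1 a) q
  rw [this, Finset.card_pair (hsne _).symm]

lemma eqv_conj (n g : ℕ) (a b : Ugen n g)
    (h : Relation.EqvGen (fun a b : Ugen n g => ∃ f ∈ ({conjB2 n} : Set _),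
      (b : Perm (Fin (2 * n))) = f a) a b) :
    ∃ k : ℤ, b.1 = (finRotate (2 * n) ^ 2) ^ k * a.1 * ((finRotate (2 * n) ^ 2) ^ k)⁻¹ := by
  induction h with
  | rel a b h =>
    obtain ⟨f, hf, h⟩ := h
    rw [Set.mem_singleton_iff] at hf
    subst hf
    exact ⟨1, by rw [h, zpow_one]; rfl⟩
  | refl a => exact ⟨0, by simp⟩
  | symm a b _ ih =>
    obtain ⟨k, hk⟩ := ih
    exact ⟨-k, by rw [hk, zpow_neg]; group⟩
  | trans a b c _ _ ih1 ih2 =>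
    obtain ⟨k, hk⟩ := ih1
    obtain ⟨l, hl⟩ := ih2
    exact ⟨l + k, by rw [hl, hk, zpow_add]; group⟩

end OO

/-- Theorem 4, relation `|OOc| = 2·|OOb|`: for every genus, the number of classes of
`U_g` under conjugation by `β²` is twice the number of classes under conjugation by
`β²` together with the swap. -/
theorem OOc_eq_two_mul_OOb (n : ℕ) (hn : 1 ≤ n) (g : ℕ) :
    numClasses n (Ugen n g) {conjB2 n}
      = 2 * numClasses n (Ugen n g) {conjB2 n, swapMap n} := by
  unfold numClasses
  refine OO.count (fun a : Ugen n g => ⟨conjB2 n a.1, OO.conj_mem n g _ a.2⟩)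
    (fun a : Ugen n g => ⟨swapMap n a.1, OO.swap_mem n g _ a.2⟩) ?_ ?_ _ _ ?_ ?_ ?_
  · intro x
    exact Subtype.ext (OO.conj_swap_swap n x.1 ((OO.mem_coset n _).1 x.2.1)).symm
  · intro x
    exact Subtype.ext (OO.conj_swap_comm n x.1)
  · intro a b
    simp [Subtype.ext_iff]
  · intro a b
    simp [Subtype.ext_iff]
  · intro x h
    obtain ⟨k, hk⟩ := OO.eqv_conj n g _ _ (Quot.eqvGen_exact h.symm)
    exact OO.no_fix n hn x.1 ((OO.mem_coset n _).1 x.2.1) k hk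
end
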